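/- arXiv:1104.2810 — 3 statements merged into one kernel-verified Lean document; each statement's English description precedes it below -/
import Mathlib

section
/- With weights w_2 = λ > 0 and w_n = (n−1)! for n ≠ 2, the normalized partition function satisfies Z_N / (e^λ (N−1)!) → 1 as N → ∞, where Z_N = (1/N)·Σ_{d_1+⋯+d_N = N−1} ∏_{i=1}^N w_{d_i+1}. -/
open Filter

/-- `Z w N n = Σ_{d_1+⋯+d_N = n} ∏_{i=1}^N w_{d_i+1}` (and `Z w 0 n = [n = 0]`). -/
noncomputable def Z (w : ℕ → ℝ) (N n : ℕ) : ℝ :=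
  ∑ d ∈ Finset.Nat.antidiagonalTuple N n, ∏ i, w (d i + 1)

/-!
`Z w N n` is the coefficient of `X ^ n` in the `N`-th power of `∑ w_{d+1} X ^ d`. For the weights
at hand that series is `λ X + G` with `G = 1 + X ^ 2 K` and `K = ∑ (d + 2)! X ^ d`. Sorting by the
number `k` of indices with `d_i = 1` gives the exponential convolution
`Z(N, N - 1) / N! = ∑_{k + m = N} (λ ^ k / k!) (c_m / m!)`, where `c_m = [X ^ (m - 1)] G ^ m` is the
same sum at `λ = 0`. As `∑ λ ^ k / k! = e ^ λ`, it remains to see that `c_m / m! → 1`. Sort `c_m` by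
the number `j` of indices with `d_i ≥ 2`: the part `j = 1` is `m * (m - 1)! = m!`, while
`[X ^ n] K ^ (j + 1) ≤ 10 ^ j (n + 2)!` makes each part `j ≥ 2` at most
`(10 ^ j / j!) m! / m`.
-/

section

open Finset PowerSeries Topology
open scoped Nat

theorem tendsto_sum_antidiagonal_mul {R : Type*} [NormedRing R] [CompleteSpace R] {a b : ℕ → R}
    {β : R} (ha : Summable (‖a ·‖)) (hb : Tendsto b atTop (𝓝 β)) :
    Tendsto (fun n => ∑ p ∈ antidiagonal n, a p.1 * b p.2) atTop (𝓝 ((∑' k, a k) * β)) := by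
  obtain ⟨M, hM⟩ := hb.norm.bddAbove_range
  have norm_b_le (n : ℕ) : ‖b n‖ ≤ M := hM ⟨n, rfl⟩
  have sum_eq_tsum (n : ℕ) : ∑ p ∈ antidiagonal n, a p.1 * b p.2 =
      ∑' k, if k ≤ n then a k * b (n - k) else 0 := by
    rw [Nat.sum_antidiagonal_eq_sum_range_succ fun i j => a i * b j,
      tsum_eq_sum (s := range (n + 1)) (by grind)]
    exact sum_congr rfl (by grind)
  simp only [sum_eq_tsum]
  rw [← ha.of_norm.tsum_mul_right]
  refine tendsto_tsum_of_dominated_convergence (ha.mul_right M) (fun k => ?_)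
    (Eventually.of_forall fun n k => ?_)
  · refine ((hb.comp (tendsto_sub_atTop_nat k)).const_mul (a k)).congr' ?_
    filter_upwards [eventually_ge_atTop k] with n hkn
    simp [hkn]
  · split_ifs
    · exact (norm_mul_le _ _).trans (by gcongr; exact norm_b_le _)
    · simpa using mul_nonneg (norm_nonneg _) ((norm_nonneg _).trans (norm_b_le 0))

theorem coeff_mul_C_mul_X_add_pow {R : Type*} [CommSemiring R] (a : R) (f g : R⟦X⟧) (n : ℕ) :
    coeff n (g * (C a * X + f) ^ n) =
      ∑ p ∈ antidiagonal n, n.choose p.1 * (a ^ p.1 * coeff p.2 (g * f ^ p.2)) := by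
  rw [(Commute.all _ _).add_pow', mul_sum, map_sum]
  refine sum_congr rfl fun p hp => ?_
  obtain rfl := mem_antidiagonal.mp hp
  rw [mul_smul_comm, map_nsmul, nsmul_eq_mul, mul_pow, ← map_pow,
    show g * (C (a ^ p.1) * X ^ p.1 * f ^ p.2) = C (a ^ p.1) * (X ^ p.1 * (g * f ^ p.2)) by ring,
    coeff_C_mul, add_comm p.1 p.2, coeff_X_pow_mul]

theorem coeff_pow_succ_le_of_coeff_sq_le {R : Type*} [CommSemiring R] [PartialOrder R]
    [IsOrderedRing R] [CanonicallyOrderedAdd R] {f : R⟦X⟧} {c : R}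
    (hf : ∀ n, coeff n (f ^ 2) ≤ c * coeff n f) (j n : ℕ) :
    coeff n (f ^ (j + 1)) ≤ c ^ j * coeff n f := by
  induction j generalizing n with
  | zero => simp
  | succ j ih =>
    calc coeff n (f ^ (j + 1 + 1))
        = ∑ p ∈ antidiagonal n, coeff p.1 (f ^ (j + 1)) * coeff p.2 f := by
          rw [pow_succ, coeff_mul]
      _ ≤ ∑ p ∈ antidiagonal n, c ^ j * coeff p.1 f * coeff p.2 f := by
          gcongr with p
          exact ih p.1
      _ = c ^ j * coeff n (f ^ 2) := by
          simp_rw [sq, coeff_mul, mul_sum, mul_assoc]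
      _ ≤ c ^ j * (c * coeff n f) := by
          gcongr
          exact hf n
      _ = c ^ (j + 1) * coeff n f := by ring

theorem factorial_add_mul_factorial_add_le (k a b : ℕ) :
    (a + k)! * (b + k)! ≤ k ! * (a + b + k)! := by
  induction b with
  | zero => rw [zero_add, add_zero, mul_comm]
  | succ b ih =>
    calc (a + k)! * (b + 1 + k)! = (b + k + 1) * ((a + k)! * (b + k)!) := by
          rw [add_right_comm, Nat.factorial_succ]; ring
      _ ≤ (a + b + k + 1) * (k ! * (a + b + k)!) := by gcongr; omega
      _ = k ! * (a + (b + 1) + k)! := by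
          rw [← add_assoc, add_right_comm _ 1, Nat.factorial_succ]; ring

/-- The two end terms are `k! (n + k)!`, and each of the `n - 1` inner ones is smaller by a factor
of order `n`. -/
theorem sum_antidiagonal_factorial_add_mul_factorial_add_le (k n : ℕ) :
    ∑ p ∈ antidiagonal n, (p.1 + k)! * (p.2 + k)! ≤ (k + 3) * k ! * (n + k)! := by
  match n with
  | 0 =>
    rw [Nat.antidiagonal_zero, sum_singleton, zero_add]
    gcongr
    exact Nat.le_mul_of_pos_left _ (by omega)
  | 1 =>
    calc ∑ p ∈ antidiagonal 1, (p.1 + k)! * (p.2 + k)! = 2 * k ! * (1 + k)! := by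
          simp only [Nat.sum_antidiagonal_succ, Nat.antidiagonal_zero, sum_singleton, zero_add]
          ring
      _ ≤ (k + 3) * k ! * (1 + k)! := by gcongr; omega
  | n + 2 =>
    have inner_le : ∑ p ∈ antidiagonal n, (p.1 + 1 + k)! * (p.2 + 1 + k)! ≤
        (k + 1) * k ! * (n + 2 + k)! := by
      calc ∑ p ∈ antidiagonal n, (p.1 + 1 + k)! * (p.2 + 1 + k)!
          ≤ ∑ _ ∈ antidiagonal n, (k + 1)! * (n + (k + 1))! := by
            refine sum_le_sum fun p hp => ?_
            rw [← mem_antidiagonal.mp hp, add_assoc, add_assoc, add_comm 1]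
            exact factorial_add_mul_factorial_add_le (k + 1) p.1 p.2
        _ = (k + 1) * k ! * ((n + 1) * (n + (k + 1))!) := by
            rw [sum_const, Nat.card_antidiagonal, smul_eq_mul, Nat.factorial_succ k]; ring
        _ ≤ (k + 1) * k ! * ((n + (k + 1) + 1) * (n + (k + 1))!) := by
            gcongr (k + 1) * k ! * (?_ * _)
            omega
        _ = (k + 1) * k ! * (n + 2 + k)! := by
            rw [← Nat.factorial_succ (n + (k + 1)), show n + (k + 1) + 1 = n + 2 + k by ring]
    have split : ∑ p ∈ antidiagonal (n + 2), (p.1 + k)! * (p.2 + k)! = 2 * (k ! * (n + 2 + k)!) +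
        ∑ p ∈ antidiagonal n, (p.1 + 1 + k)! * (p.2 + 1 + k)! := by
      rw [Nat.sum_antidiagonal_succ, Nat.sum_antidiagonal_succ']
      simp only [zero_add]
      ring
    linarith

theorem Z_eq_coeff_pow (w : ℕ → ℝ) (N n : ℕ) :
    Z w N n = coeff n ((PowerSeries.mk fun d => w (d + 1)) ^ N) := by
  rw [← Fin.prod_const, coeff_prod, Z]
  exact (sum_equiv Finsupp.equivFunOnFinite (by simp [Nat.mem_antidiagonalTuple])
    (by simp)).symm

/-- The series `∑ (d + k)! X ^ d`. -/
def factorialSeries (k : ℕ) : ℕ⟦X⟧ := PowerSeries.mk fun d => (d + k)!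

theorem coeff_factorialSeries_pow_succ_le (k j n : ℕ) :
    coeff n (factorialSeries k ^ (j + 1)) ≤ ((k + 3) * k !) ^ j * (n + k)! := by
  have coeff_sq_le (n : ℕ) :
      coeff n (factorialSeries k ^ 2) ≤ (k + 3) * k ! * coeff n (factorialSeries k) := by
    simpa only [sq, coeff_mul, factorialSeries, coeff_mk] using
      sum_antidiagonal_factorial_add_mul_factorial_add_le k n
  simpa only [factorialSeries, coeff_mk] using coeff_pow_succ_le_of_coeff_sq_le coeff_sq_le j n

/-- The generating series `∑ w_{d+1} X ^ d` of the weights with `λ = 0`. -/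
noncomputable def unaryFreeSeries : ℕ⟦X⟧ := 1 + X ^ 2 * factorialSeries 2

/-- The sum `Z(m, m - 1)` for the weights with `λ = 0`. The factor `X` makes it vanish at `m = 0`,
where the truncated `m - 1` would give `1`. -/
noncomputable def unaryFreeTotal (m : ℕ) : ℕ := coeff m (X * unaryFreeSeries ^ m)

/-- The part of `unaryFreeTotal m` coming from the tuples with exactly `j` entries `d_i ≥ 2`. -/
noncomputable def branchingTotal (m j : ℕ) : ℕ :=
  m.choose j * coeff m (X ^ (2 * j + 1) * factorialSeries 2 ^ j)

theorem unaryFreeTotal_eq_sum_branchingTotal (m : ℕ) :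
    unaryFreeTotal m = ∑ j ∈ range (m + 1), branchingTotal m j := by
  rw [unaryFreeTotal, unaryFreeSeries, add_comm, add_pow, mul_sum, map_sum]
  refine sum_congr rfl fun j _ => ?_
  rw [branchingTotal, one_pow, mul_one, mul_pow, ← pow_mul, mul_comm _ (m.choose j : ℕ⟦X⟧),
    mul_left_comm, ← mul_assoc X, ← pow_succ', ← nsmul_eq_mul, map_nsmul, smul_eq_mul]

theorem branchingTotal_zero_right {m : ℕ} (hm : m ≠ 1) : branchingTotal m 0 = 0 := by
  simp [branchingTotal, coeff_X, hm]

theorem branchingTotal_one_right {m : ℕ} (hm : 3 ≤ m) : branchingTotal m 1 = m ! := by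
  obtain ⟨r, rfl⟩ := Nat.exists_eq_add_of_le' hm
  rw [branchingTotal, mul_one, pow_one, coeff_X_pow_mul, factorialSeries, coeff_mk,
    Nat.choose_one_right, Nat.factorial_succ (r + 2)]

theorem mul_factorial_mul_branchingTotal_le {m j : ℕ} (hj : 2 ≤ j) :
    m * (j ! * branchingTotal m j) ≤ 10 ^ j * m ! := by
  obtain ⟨i, rfl⟩ := Nat.exists_eq_add_of_le' hj
  by_cases hm : m < 2 * (i + 2) + 1
  · simp [branchingTotal, coeff_X_pow_mul', hm.not_ge]
  obtain ⟨r, rfl⟩ := Nat.exists_eq_add_of_le' (not_lt.mp hm)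
  set m := r + (2 * (i + 2) + 1) with hm_def
  have coeff_le : coeff r (factorialSeries 2 ^ (i + 2)) ≤ 10 ^ (i + 1) * (r + 2)! :=
    coeff_factorialSeries_pow_succ_le 2 (i + 1) r
  have mul_factorial_le : m * (r + 2)! ≤ 2 * (r + i + 3)! :=
    calc m * (r + 2)! ≤ 2 * (r + i + 3) * (r + i + 2)! := by gcongr <;> omega
      _ = 2 * (r + i + 3)! := by rw [Nat.factorial_succ (r + i + 2)]; ring
  have choose_mul : m.choose (i + 2) * (i + 2)! * (r + i + 3)! = m ! := by
    convert Nat.choose_mul_factorial_mul_factorial (show i + 2 ≤ m by omega) using 3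
    omega
  calc m * ((i + 2)! * branchingTotal m (i + 2))
      = m.choose (i + 2) * (i + 2)! * (m * coeff r (factorialSeries 2 ^ (i + 2))) := by
        rw [branchingTotal, hm_def, coeff_X_pow_mul]; ring
    _ ≤ m.choose (i + 2) * (i + 2)! * (m * (10 ^ (i + 1) * (r + 2)!)) := by gcongr
    _ = m.choose (i + 2) * (i + 2)! * (10 ^ (i + 1) * (m * (r + 2)!)) := by ring
    _ ≤ m.choose (i + 2) * (i + 2)! * (10 ^ (i + 1) * (2 * (r + i + 3)!)) := by gcongr
    _ = 2 * 10 ^ (i + 1) * m ! := by rw [← choose_mul]; ring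
    _ ≤ 10 ^ (i + 2) * m ! := by gcongr; rw [pow_succ' 10 (i + 1)]; gcongr; norm_num

theorem unaryFreeTotal_eq_factorial_add {m : ℕ} (hm : 3 ≤ m) :
    unaryFreeTotal m = m ! + ∑ j ∈ Ico 2 (m + 1), branchingTotal m j := by
  rw [unaryFreeTotal_eq_sum_branchingTotal, range_eq_Ico, sum_eq_sum_Ico_succ_bot (by omega),
    sum_eq_sum_Ico_succ_bot (by omega), branchingTotal_zero_right (by omega), zero_add,
    branchingTotal_one_right hm]

theorem factorial_le_unaryFreeTotal {m : ℕ} (hm : 3 ≤ m) : m ! ≤ unaryFreeTotal m := by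
  rw [unaryFreeTotal_eq_factorial_add hm]
  exact Nat.le_add_right _ _

theorem branchingTotal_div_factorial_le {m j : ℕ} (hm : m ≠ 0) (hj : 2 ≤ j) :
    (branchingTotal m j : ℝ) / m ! ≤ 10 ^ j / j ! / m := by
  have h : (m * (j ! * branchingTotal m j) : ℝ) ≤ 10 ^ j * m ! := by
    exact_mod_cast mul_factorial_mul_branchingTotal_le hj
  rw [div_div, div_le_div_iff₀ (by positivity) (by positivity)]
  linarith

theorem unaryFreeTotal_div_factorial_le {m : ℕ} (hm : 3 ≤ m) :
    (unaryFreeTotal m : ℝ) / m ! ≤ 1 + Real.exp 10 / m :=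
  calc (unaryFreeTotal m : ℝ) / m !
      = 1 + ∑ j ∈ Ico 2 (m + 1), (branchingTotal m j : ℝ) / m ! := by
        rw [unaryFreeTotal_eq_factorial_add hm, Nat.cast_add, Nat.cast_sum, add_div, sum_div,
          div_self (by positivity)]
    _ ≤ 1 + ∑ j ∈ Ico 2 (m + 1), (10 ^ j / j ! / m : ℝ) := by
        gcongr 1 + ∑ j ∈ _, ?_ with j hj
        exact branchingTotal_div_factorial_le (by omega : m ≠ 0) (mem_Ico.mp hj).1
    _ ≤ 1 + ∑ j ∈ range (m + 1), (10 ^ j / j ! / m : ℝ) := by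
        gcongr
        rw [range_eq_Ico]
        exact Ico_subset_Ico_left (Nat.zero_le 2)
    _ ≤ 1 + Real.exp 10 / m := by
        rw [← sum_div]
        gcongr
        exact Real.sum_le_exp_of_nonneg (by norm_num) _

theorem tendsto_unaryFreeTotal_div_factorial :
    Tendsto (fun m => (unaryFreeTotal m : ℝ) / m !) atTop (𝓝 1) := by
  have upper_tendsto : Tendsto (fun m : ℕ => 1 + Real.exp 10 / m) atTop (𝓝 1) := by
    simpa using (tendsto_const_div_atTop_nhds_zero_nat (Real.exp 10)).const_add 1
  refine tendsto_of_tendsto_of_tendsto_of_le_of_le' tendsto_const_nhds upper_tendsto ?_ ?_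
  · filter_upwards [eventually_ge_atTop 3] with m hm
    rw [one_le_div (by positivity)]
    exact_mod_cast factorial_le_unaryFreeTotal hm
  · filter_upwards [eventually_ge_atTop 3] with m hm
    exact unaryFreeTotal_div_factorial_le hm

theorem mk_weights_eq_C_mul_X_add_unaryFreeSeries (l : ℝ) :
    (PowerSeries.mk fun d => if d + 1 = 2 then l else ((d + 1 - 1)! : ℝ)) =
      C l * X + unaryFreeSeries.map (Nat.castRingHom ℝ) := by
  ext d
  rcases d with _ | _ | d
  · simp [unaryFreeSeries]
  · simp [unaryFreeSeries, coeff_one, coeff_X_pow_mul']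
  · simp [unaryFreeSeries, factorialSeries, coeff_one, coeff_X_pow_mul']

theorem Z_div_factorial_eq_sum_antidiagonal (l : ℝ) (n : ℕ) :
    Z (fun n => if n = 2 then l else ((n - 1)! : ℝ)) (n + 1) n / (n + 1)! =
      ∑ p ∈ antidiagonal (n + 1), l ^ p.1 / p.1 ! * (unaryFreeTotal p.2 / p.2 !) := by
  have coeff_map (m : ℕ) : coeff m (X * unaryFreeSeries.map (Nat.castRingHom ℝ) ^ m) =
      (unaryFreeTotal m : ℝ) := by
    rw [← PowerSeries.map_X (Nat.castRingHom ℝ), ← map_pow, ← map_mul, PowerSeries.coeff_map,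
      unaryFreeTotal, eq_natCast]
  rw [Z_eq_coeff_pow, mk_weights_eq_C_mul_X_add_unaryFreeSeries, ← coeff_succ_X_mul,
    coeff_mul_C_mul_X_add_pow, sum_div]
  refine sum_congr rfl fun p hp => ?_
  rw [coeff_map, ← mem_antidiagonal.mp hp, Nat.cast_add_choose]
  field_simp

end

theorem stmt_5_general (l : ℝ) :
    Tendsto (fun N : ℕ =>
        (Z (fun n => if n = 2 then l else ((n - 1).factorial : ℝ)) N (N - 1) / N) /
          (Real.exp l * ((N - 1).factorial : ℝ)))
      atTop (nhds 1) := by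
  have h := (tendsto_sum_antidiagonal_mul (Real.summable_pow_div_factorial l).norm
    tendsto_unaryFreeTotal_div_factorial).div_const (Real.exp l)
  rw [mul_one, (NormedSpace.expSeries_div_hasSum_exp l).tsum_eq, ← Real.exp_eq_exp_ℝ,
    div_self (Real.exp_ne_zero l)] at h
  refine h.congr' ?_
  filter_upwards [eventually_ge_atTop 1] with N hN
  obtain ⟨n, rfl⟩ := Nat.exists_eq_add_of_le' hN
  rw [← Z_div_factorial_eq_sum_antidiagonal, Nat.add_sub_cancel, Nat.factorial_succ]
  push_cast
  field_simp

/-- Theorem 2, partition function asymptotics: with `w_2 = λ` and `w_n = (n−1)!` otherwise,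
`Z_N / (e^λ (N−1)!) → 1`, where `Z_N = Z(N,N−1)/N`. -/
theorem stmt_5 (l : ℝ) (hl : 0 < l) :
    Tendsto (fun N : ℕ =>
        (Z (fun n => if n = 2 then l else ((n - 1).factorial : ℝ)) N (N - 1) / N) /
          (Real.exp l * ((N - 1).factorial : ℝ)))
      atTop (nhds 1) :=
  stmt_5_general l
end

section
/- With weights w_n = ((n−1)!)^α for fixed 0 < α < 1, the partition function satisfies log Z_N = α·log((N−1)!) + O(N^{1−α}) as N → ∞; equivalently log Z_N = αN log N − αN + O(N^{1−α}). -/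
open Filter

/-!
Concentrating the whole sum `N - 1` in a single entry gives `Z(N, N - 1) ≥ N ((N - 1)!)^α`. For the
upper bound, write `n = N - 1` and single out a maximal entry `m` of the tuple `d`; the remaining
`n` entries are at most `m` and sum to `n - m`, so for every `y > 0` they contribute at most
`y^{-α(n-m)} (∑_{k ≤ m} (k! y^k)^α)^n`. The choice `1/y = max(m + 1, n/e)` works for all `m`
simultaneously: it gives `m! ≤ n! y^{n-m}`, and since `y ≤ 1/(m + 1)` the inner sum is dominated by
a geometric series and equals `1 + O(y^α) = 1 + O(n^{-α})`. Hence each choice of the position and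
the value of the maximum contributes at most `(n!)^α exp(O(n^{1-α}))`, and there are only `N^2`
such choices, while `log N = O(N^{1-α})`.
-/

section PartitionFunction

open Finset

/-- The part of the partition function `Z w N n` coming from the tuples `d` all of whose entries
are at most `m`. -/
noncomputable def cappedZ (w : ℕ → ℝ) (m N n : ℕ) : ℝ :=
  ∑ d ∈ Nat.antidiagonalTuple N n with ∀ i, d i ≤ m, ∏ i, w (d i + 1)

theorem sum_antidiagonalTuple_succAbove {M : Type*} [AddCommMonoid M] {N : ℕ} (n : ℕ)
    (i : Fin (N + 1)) (f : ℕ → (Fin N → ℕ) → M) :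
    ∑ d ∈ Nat.antidiagonalTuple (N + 1) n, f (d i) (i.removeNth d) =
      ∑ p ∈ antidiagonal n, ∑ e ∈ Nat.antidiagonalTuple N p.2, f p.1 e := by
  rw [sum_sigma']
  refine sum_nbij' (fun d ↦ ⟨(d i, ∑ j, i.removeNth d j), i.removeNth d⟩)
    (fun q ↦ i.insertNth q.1.1 q.2) ?_ ?_ ?_ ?_ ?_
  · intro d hd
    rw [Nat.mem_antidiagonalTuple, Fin.sum_univ_succAbove d i] at hd
    simpa [Nat.mem_antidiagonalTuple, Fin.removeNth] using hd
  · rintro ⟨⟨a, b⟩, e⟩ hq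
    simp only [mem_sigma, HasAntidiagonal.mem_antidiagonal, Nat.mem_antidiagonalTuple] at hq
    simp [Nat.mem_antidiagonalTuple, Fin.sum_univ_succAbove _ i, hq]
  · intro d _
    simp
  · rintro ⟨⟨a, b⟩, e⟩ hq
    simp only [mem_sigma, HasAntidiagonal.mem_antidiagonal, Nat.mem_antidiagonalTuple] at hq
    simp [hq.2]
  · intro d _
    rfl

variable {w : ℕ → ℝ} {x : ℝ}

theorem prod_le_sum_ite_removeNth_le (hw : ∀ k, 0 ≤ w k) {N : ℕ} (d : Fin (N + 1) → ℕ) :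
    ∏ j, w (d j + 1) ≤ ∑ i, if ∀ j, i.removeNth d j ≤ d i then
      w (d i + 1) * ∏ j, w (i.removeNth d j + 1) else 0 := by
  obtain ⟨i, -, hi⟩ := exists_max_image univ d univ_nonempty
  have others_le : ∀ j, i.removeNth d j ≤ d i := fun j ↦ hi _ (mem_univ _)
  calc ∏ j, w (d j + 1)
      = if ∀ j, i.removeNth d j ≤ d i then
          w (d i + 1) * ∏ j, w (i.removeNth d j + 1) else 0 := by
        rw [if_pos others_le, Fin.prod_univ_succAbove _ i]
        rfl
    _ ≤ _ := by
        refine single_le_sum (f := fun i : Fin (N + 1) ↦ if ∀ j, i.removeNth d j ≤ d i then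
          w (d i + 1) * ∏ j, w (i.removeNth d j + 1) else 0) (fun i _ ↦ ?_) (mem_univ i)
        split_ifs
        exacts [mul_nonneg (hw _) (prod_nonneg fun _ _ ↦ hw _), le_rfl]

theorem Z_succ_le_sum_cappedZ (hw : ∀ k, 0 ≤ w k) (N n : ℕ) :
    Z w (N + 1) n ≤ (N + 1) * ∑ p ∈ antidiagonal n, w (p.1 + 1) * cappedZ w p.1 N p.2 := by
  calc Z w (N + 1) n
      ≤ ∑ d ∈ Nat.antidiagonalTuple (N + 1) n, ∑ i, if ∀ j, i.removeNth d j ≤ d i then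
          w (d i + 1) * ∏ j, w (i.removeNth d j + 1) else 0 :=
        sum_le_sum fun d _ ↦ prod_le_sum_ite_removeNth_le hw d
    _ = ∑ _i : Fin (N + 1), ∑ p ∈ antidiagonal n, w (p.1 + 1) * cappedZ w p.1 N p.2 := by
        rw [sum_comm]
        refine sum_congr rfl fun i _ ↦ ?_
        rw [sum_antidiagonalTuple_succAbove n i fun a e ↦
          if ∀ j, e j ≤ a then w (a + 1) * ∏ j, w (e j + 1) else 0]
        simp only [cappedZ, sum_filter, mul_sum, mul_ite, mul_zero]
    _ = _ := by simp

theorem cappedZ_mul_pow_le (hw : ∀ k, 0 ≤ w k) (hx : 0 ≤ x) (m N n : ℕ) :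
    cappedZ w m N n * x ^ n ≤ (∑ k ∈ range (m + 1), w (k + 1) * x ^ k) ^ N := by
  rw [cappedZ, sum_mul, sum_pow']
  calc ∑ d ∈ Nat.antidiagonalTuple N n with ∀ i, d i ≤ m, (∏ i, w (d i + 1)) * x ^ n
      = ∑ d ∈ Nat.antidiagonalTuple N n with ∀ i, d i ≤ m, ∏ i, w (d i + 1) * x ^ d i := by
        refine sum_congr rfl fun d hd ↦ ?_
        rw [prod_mul_distrib, prod_pow_eq_pow_sum,
          Nat.mem_antidiagonalTuple.1 (mem_filter.1 hd).1]
    _ ≤ _ := by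
        refine sum_le_sum_of_subset_of_nonneg (fun d hd ↦ ?_) fun d _ _ ↦
          prod_nonneg fun i _ ↦ mul_nonneg (hw _) (pow_nonneg hx _)
        simpa [Fintype.mem_piFinset, Nat.lt_succ_iff] using (mem_filter.1 hd).2

theorem natCast_mul_le_Z (hw : ∀ k, 0 ≤ w k) (N : ℕ) {n : ℕ} (hn : n ≠ 0) :
    N * (w (n + 1) * w 1 ^ (N - 1)) ≤ Z w N n := by
  have single_injective : Function.Injective fun i : Fin N ↦ (Pi.single i n : Fin N → ℕ) :=
    fun i j h ↦ by
      by_contra hij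
      exact hn (by simpa [Pi.single_eq_of_ne hij] using congrFun h i)
  calc (N * (w (n + 1) * w 1 ^ (N - 1)) : ℝ)
      = ∑ i : Fin N, ∏ j, w ((Pi.single i n : Fin N → ℕ) j + 1) := by
        have prod_single (i : Fin N) : ∏ j, w ((Pi.single i n : Fin N → ℕ) j + 1) =
            w (n + 1) * w 1 ^ (N - 1) := by
          rw [← mul_prod_erase univ _ (mem_univ i), Pi.single_eq_same,
            prod_congr rfl fun j hj ↦ by rw [Pi.single_eq_of_ne (ne_of_mem_erase hj)]]
          simp
        simp [prod_single]
    _ = ∑ d ∈ univ.image fun i : Fin N ↦ (Pi.single i n : Fin N → ℕ), ∏ j, w (d j + 1) := by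
        rw [sum_image single_injective.injOn]
    _ ≤ Z w N n := by
        refine sum_le_sum_of_subset_of_nonneg (image_subset_iff.2 fun i _ ↦ ?_) fun d _ _ ↦
          prod_nonneg fun _ _ ↦ hw _
        simp [Nat.mem_antidiagonalTuple]

end PartitionFunction

section FactorialBounds

open Real
open scoped Nat

theorem factorial_succ_le_pow (k : ℕ) : ((k + 1)! : ℝ) ≤ (2 / 3 * (k + 2)) ^ k := by
  induction k with
  | zero => simp
  | succ k ih =>
    have bernoulli : (3 / 2 : ℝ) ≤ (1 + 1 / (k + 2)) ^ (k + 1) := by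
      have half_le : (1 / 2 : ℝ) ≤ (k + 1) * (1 / (k + 2)) := by
        rw [mul_one_div, div_le_div_iff₀ two_pos (by positivity)]
        linarith [(k.cast_nonneg : (0 : ℝ) ≤ k)]
      have := one_add_mul_le_pow (a := (1 / (k + 2) : ℝ))
        (le_trans (by norm_num) (by positivity : (0 : ℝ) ≤ _)) (k + 1)
      push_cast at this
      linarith
    calc ((k + 1 + 1)! : ℝ)
        = (k + 2) * (k + 1)! := by rw [Nat.factorial_succ (k + 1)]; push_cast; ring
      _ ≤ (k + 2) * (2 / 3 * (k + 2)) ^ k := by gcongr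
      _ = 3 / 2 * (2 / 3 * (k + 2)) ^ (k + 1) := by ring
      _ ≤ (1 + 1 / (k + 2)) ^ (k + 1) * (2 / 3 * (k + 2)) ^ (k + 1) := by gcongr
      _ = (2 / 3 * ((k + 1 : ℕ) + 2)) ^ (k + 1) := by
        rw [← mul_pow]
        congr 1
        push_cast
        field_simp
        ring

theorem div_exp_one_pow_le_factorial (n : ℕ) : ((n : ℝ) / exp 1) ^ n ≤ n ! := by
  have := pow_div_factorial_le_exp (n : ℝ) n.cast_nonneg n
  rw [div_le_iff₀ (by positivity)] at this
  rwa [div_pow, ← exp_nat_mul, mul_one, div_le_iff₀' (by positivity)]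

theorem factorial_mul_max_pow_le_factorial {m n : ℕ} (hmn : m ≤ n) :
    (m ! : ℝ) * max ((m : ℝ) + 1) (n / exp 1) ^ (n - m) ≤ n ! := by
  rcases le_total ((n : ℝ) / exp 1) (m + 1) with h | h
  · rw [max_eq_left h]
    have := Nat.factorial_mul_pow_le_factorial (m := m) (n := n - m)
    rw [Nat.add_sub_cancel' hmn] at this
    exact_mod_cast this
  · rw [max_eq_right h]
    have factorial_le : (m ! : ℝ) ≤ (n / exp 1) ^ m :=
      calc (m ! : ℝ) ≤ (m : ℝ) ^ m := mod_cast Nat.factorial_le_pow m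
        _ ≤ _ := by gcongr; linarith
    calc (m ! : ℝ) * (n / exp 1) ^ (n - m)
        ≤ (n / exp 1) ^ m * (n / exp 1) ^ (n - m) := by gcongr
      _ = (n / exp 1) ^ n := by rw [← pow_add, Nat.add_sub_cancel' hmn]
      _ ≤ n ! := div_exp_one_pow_le_factorial n

variable {α y : ℝ}

/-- The sum of the geometric series of ratio `(2 / 3) ^ α`, for `0 < α`: the constant in the bound
`1 + O(y ^ α)` for the truncated generating function of the weights `k ! ^ α`. -/
noncomputable def geomConst (α : ℝ) : ℝ := (1 - (2 / 3 : ℝ) ^ α)⁻¹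

theorem geomConst_pos (hα : 0 < α) : 0 < geomConst α :=
  inv_pos.2 (sub_pos.2 (rpow_lt_one (by norm_num) (by norm_num) hα))

theorem factorial_succ_mul_pow_le {k m : ℕ} (hkm : k < m) (hy : 0 ≤ y) (hym : y * (m + 1) ≤ 1) :
    (k + 1)! * y ^ (k + 1) ≤ (2 / 3) ^ k * y := by
  have hkm' : (k : ℝ) + 2 ≤ m + 1 := by exact_mod_cast Nat.succ_le_succ hkm
  calc (k + 1)! * y ^ (k + 1)
      ≤ (2 / 3 * (k + 2)) ^ k * y ^ (k + 1) := by gcongr; exact factorial_succ_le_pow k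
    _ = (2 / 3) ^ k * y * (y * (k + 2)) ^ k := by rw [mul_pow, mul_pow]; ring
    _ ≤ (2 / 3) ^ k * y * 1 := by
      gcongr
      exact pow_le_one₀ (by positivity) ((mul_le_mul_of_nonneg_left hkm' hy).trans hym)
    _ = (2 / 3) ^ k * y := mul_one _

theorem sum_factorial_mul_pow_rpow_le {m : ℕ} (hα : 0 < α) (hy : 0 ≤ y) (hym : y * (m + 1) ≤ 1) :
    ∑ k ∈ Finset.range (m + 1), (k ! * y ^ k) ^ α ≤ 1 + geomConst α * y ^ α := by
  have ratio_lt_one : (2 / 3 : ℝ) ^ α < 1 := rpow_lt_one (by norm_num) (by norm_num) hα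
  calc ∑ k ∈ Finset.range (m + 1), (k ! * y ^ k) ^ α
      = 1 + ∑ k ∈ Finset.range m, ((k + 1)! * y ^ (k + 1)) ^ α := by
        simp [Finset.sum_range_succ', add_comm]
    _ ≤ 1 + ∑ k ∈ Finset.range m, ((2 / 3 : ℝ) ^ k * y) ^ α := by
        gcongr 1 + ∑ k ∈ _, ?_ ^ α with k hk
        exact factorial_succ_mul_pow_le (Finset.mem_range.1 hk) hy hym
    _ = 1 + (∑ k ∈ Finset.range m, ((2 / 3 : ℝ) ^ α) ^ k) * y ^ α := by
        rw [Finset.sum_mul]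
        congr! 2 with k
        rw [mul_rpow (by positivity) hy, rpow_pow_comm (by norm_num)]
    _ ≤ 1 + geomConst α * y ^ α := by
        gcongr
        simpa [geomConst] using
          geom_sum_Ico_le_of_lt_one (m := 0) (n := m) (by positivity) ratio_lt_one

end FactorialBounds

section FactorialWeight

open Real
open scoped Nat

variable {α : ℝ} {n : ℕ}

/-- The weights `w_n = ((n - 1)!) ^ α`. Truncated subtraction gives `w_0 = 1`, a value that does not
enter the partition function. -/
noncomputable def factorialWeight (α : ℝ) (n : ℕ) : ℝ := ((n - 1)! : ℝ) ^ α

theorem factorialWeight_succ (α : ℝ) (n : ℕ) : factorialWeight α (n + 1) = (n ! : ℝ) ^ α := rfl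

theorem factorialWeight_nonneg (α : ℝ) (n : ℕ) : 0 ≤ factorialWeight α n := by
  unfold factorialWeight
  positivity

theorem sum_factorialWeight_mul_pow_le {y : ℝ} {m : ℕ} (hα : 0 < α) (hy : 0 ≤ y)
    (hym : y * (m + 1) ≤ 1) :
    ∑ k ∈ Finset.range (m + 1), factorialWeight α (k + 1) * (y ^ α) ^ k ≤
      1 + geomConst α * y ^ α := by
  convert! sum_factorial_mul_pow_rpow_le hα hy hym using 2 with k
  rw [factorialWeight_succ, rpow_pow_comm hy, mul_rpow (by positivity) (by positivity)]

theorem factorialWeight_mul_cappedZ_le {m : ℕ} (hα : 0 < α) (N : ℕ) (hn : 0 < n) (hmn : m ≤ n) :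
    factorialWeight α (m + 1) * cappedZ (factorialWeight α) m N (n - m) ≤
      (n ! : ℝ) ^ α * (1 + geomConst α * (exp 1 / n) ^ α) ^ N := by
  set g : ℝ := max ((m : ℝ) + 1) (n / exp 1)
  have hg_pos : 0 < g := lt_max_of_lt_left (by positivity)
  have hgm : g⁻¹ * (m + 1) ≤ 1 := inv_mul_le_one_of_le₀ (le_max_left _ _) hg_pos.le
  have hgn : g⁻¹ ≤ exp 1 / n := by
    rw [← inv_div]
    exact inv_anti₀ (by positivity) (le_max_right _ _)
  have weight_le : (m ! : ℝ) ^ α ≤ (n ! : ℝ) ^ α * (g⁻¹ ^ α) ^ (n - m) := by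
    rw [rpow_pow_comm (by positivity), ← mul_rpow (by positivity) (by positivity), inv_pow,
      ← div_eq_mul_inv]
    gcongr
    exact (le_div_iff₀ (by positivity)).2 (factorial_mul_max_pow_le_factorial hmn)
  have capped_nonneg : 0 ≤ cappedZ (factorialWeight α) m N (n - m) :=
    Finset.sum_nonneg fun _ _ ↦ Finset.prod_nonneg fun _ _ ↦ factorialWeight_nonneg α _
  have hC := geomConst_pos hα
  calc factorialWeight α (m + 1) * cappedZ (factorialWeight α) m N (n - m)
      ≤ (n ! : ℝ) ^ α * (g⁻¹ ^ α) ^ (n - m) * cappedZ (factorialWeight α) m N (n - m) :=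
        mul_le_mul_of_nonneg_right weight_le capped_nonneg
    _ = (n ! : ℝ) ^ α * (cappedZ (factorialWeight α) m N (n - m) * (g⁻¹ ^ α) ^ (n - m)) := by ring
    _ ≤ (n ! : ℝ) ^ α *
          (∑ k ∈ Finset.range (m + 1), factorialWeight α (k + 1) * (g⁻¹ ^ α) ^ k) ^ N := by
        gcongr
        exact cappedZ_mul_pow_le (factorialWeight_nonneg α) (by positivity) m N (n - m)
    _ ≤ (n ! : ℝ) ^ α * (1 + geomConst α * g⁻¹ ^ α) ^ N := by
        gcongr
        · exact Finset.sum_nonneg fun k _ ↦ mul_nonneg (factorialWeight_nonneg α _) (by positivity)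
        · exact sum_factorialWeight_mul_pow_le hα (by positivity) hgm
    _ ≤ (n ! : ℝ) ^ α * (1 + geomConst α * (exp 1 / n) ^ α) ^ N := by gcongr

theorem Z_factorialWeight_le (hα : 0 < α) (N : ℕ) (hn : 0 < n) :
    Z (factorialWeight α) (N + 1) n ≤
      (N + 1) * ((n + 1) * ((n ! : ℝ) ^ α * (1 + geomConst α * (exp 1 / n) ^ α) ^ N)) := by
  refine (Z_succ_le_sum_cappedZ (factorialWeight_nonneg α) N n).trans ?_
  gcongr
  rw [Finset.Nat.sum_antidiagonal_eq_sum_range_succ fun m k ↦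
    factorialWeight α (m + 1) * cappedZ (factorialWeight α) m N k]
  refine (Finset.sum_le_card_nsmul _ _ _ fun m hm ↦ factorialWeight_mul_cappedZ_le hα N hn
    (Nat.lt_succ_iff.1 (Finset.mem_range.1 hm))).trans_eq ?_
  simp

theorem factorial_rpow_le_Z_div (α : ℝ) (N : ℕ) (hn : n ≠ 0) :
    (n ! : ℝ) ^ α ≤ Z (factorialWeight α) (N + 1) n / (N + 1 : ℕ) := by
  rw [le_div_iff₀' (by positivity)]
  simpa [factorialWeight] using natCast_mul_le_Z (factorialWeight_nonneg α) (N + 1) hn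

theorem mul_log_factorial_le_log_Z_div (α : ℝ) (N : ℕ) (hn : n ≠ 0) :
    α * log n ! ≤ log (Z (factorialWeight α) (N + 1) n / (N + 1 : ℕ)) := by
  rw [← log_rpow (by positivity)]
  exact log_le_log (by positivity) (factorial_rpow_le_Z_div α N hn)

theorem log_Z_div_sub_le (hα : 0 < α) (N : ℕ) (hn : 0 < n) :
    log (Z (factorialWeight α) (N + 1) n / (N + 1 : ℕ)) - α * log n ! ≤
      log (n + 1) + N * (geomConst α * (exp 1 / n) ^ α) := by
  have hC := geomConst_pos hα
  have Z_div_le : Z (factorialWeight α) (N + 1) n / (N + 1 : ℕ) ≤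
      (n + 1) * ((n ! : ℝ) ^ α * (1 + geomConst α * (exp 1 / n) ^ α) ^ N) := by
    rw [div_le_iff₀' (by positivity)]
    exact_mod_cast Z_factorialWeight_le hα N hn
  have Z_div_pos : 0 < Z (factorialWeight α) (N + 1) n / (N + 1 : ℕ) :=
    lt_of_lt_of_le (by positivity) (factorial_rpow_le_Z_div α N hn.ne')
  rw [sub_le_iff_le_add]
  calc log (Z (factorialWeight α) (N + 1) n / (N + 1 : ℕ))
      ≤ log ((n + 1) * ((n ! : ℝ) ^ α * (1 + geomConst α * (exp 1 / n) ^ α) ^ N)) :=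
        log_le_log Z_div_pos Z_div_le
    _ = log (n + 1) + (α * log n ! + N * log (1 + geomConst α * (exp 1 / n) ^ α)) := by
        rw [log_mul (by positivity) (by positivity), log_mul (by positivity) (by positivity),
          log_rpow (by positivity), log_pow]
    _ ≤ log (n + 1) + (α * log n ! + N * (geomConst α * (exp 1 / n) ^ α)) := by
        gcongr
        exact (log_le_sub_one_of_pos (by positivity)).trans_eq (add_sub_cancel_left _ _)
    _ = _ := by ring

theorem mul_div_rpow {c x : ℝ} (hc : 0 ≤ c) (hx : 0 < x) (α : ℝ) :
    x * (c / x) ^ α = c ^ α * x ^ (1 - α) := by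
  rw [div_rpow hc hx.le, rpow_sub hx, rpow_one]
  ring

theorem log_Z_div_sub_mem_Icc (hα₀ : 0 < α) (hα₁ : α ≤ 1) {N : ℕ} (hN : 2 ≤ N) :
    log (Z (factorialWeight α) N (N - 1) / N) - α * log (N - 1)! ∈
      Set.Icc 0 (log N + geomConst α * exp 1 ^ α * (N : ℝ) ^ (1 - α)) := by
  obtain ⟨n, rfl⟩ := Nat.exists_eq_add_of_le' (one_le_two.trans hN)
  have hn : 0 < n := by lia
  refine ⟨sub_nonneg.2 (mul_log_factorial_le_log_Z_div α n hn.ne'),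
    (log_Z_div_sub_le hα₀ n hn).trans ?_⟩
  have hC := geomConst_pos hα₀
  calc log (n + 1) + n * (geomConst α * (exp 1 / n) ^ α)
      = log (n + 1) + geomConst α * exp 1 ^ α * (n : ℝ) ^ (1 - α) := by
        rw [mul_left_comm, mul_div_rpow (exp_pos 1).le (by positivity), mul_assoc]
    _ ≤ log (n + 1 : ℕ) + geomConst α * exp 1 ^ α * ((n + 1 : ℕ) : ℝ) ^ (1 - α) := by
        rw [Nat.cast_succ]
        gcongr
        linarith

end FactorialWeight

/-- Theorem 3, Eq. (7): with `w_n = ((n−1)!)^α`, `0 < α < 1`,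
`log Z_N = α·log((N−1)!) + O(N^{1−α})` as `N → ∞`. -/
theorem stmt_8 (α : ℝ) (h0 : 0 < α) (h1 : α < 1) :
    (fun N : ℕ =>
        Real.log (Z (fun n => ((n - 1).factorial : ℝ) ^ α) N (N - 1) / N)
          - α * Real.log ((N - 1).factorial)) =O[atTop]
      fun N : ℕ => (N : ℝ) ^ (1 - α) := by
  have log_isBigO : (fun N : ℕ ↦ Real.log N) =O[atTop] fun N : ℕ ↦ (N : ℝ) ^ (1 - α) :=
    (isLittleO_log_rpow_atTop (sub_pos.2 h1)).isBigO.comp_tendsto tendsto_natCast_atTop_atTop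
  have bound_isBigO := log_isBigO.add
    ((Asymptotics.isBigO_refl (fun N : ℕ ↦ (N : ℝ) ^ (1 - α)) atTop).const_mul_left
      (geomConst α * Real.exp 1 ^ α))
  refine .trans (.of_norm_eventuallyLE ?_) bound_isBigO
  filter_upwards [eventually_ge_atTop 2] with N hN
  obtain ⟨nonneg, le_bound⟩ := log_Z_div_sub_mem_Icc h0 h1.le hN
  exact (Real.norm_of_nonneg nonneg).trans_le le_bound
end

section
/- With weights w_n = ((n−1)!)^α, 0 < α < 1, and K = ⌊1/α⌋, the probability under ν_N that the random tree T_N has some vertex other than s of degree greater than K+1 tends to 0 as N → ∞. -/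
open Filter

/-- Rooted planar trees (the tree hanging from the vertex `s` next to the root `r`;
the full tree of the paper with `N` edges corresponds to a `PTree` with `N` vertices,
plus the extra root `r` of degree 1 attached to the root `s` of the `PTree`). -/
inductive PTree : Type where
  | node : List PTree → PTree

namespace PTree

/-- The (ordered) subtrees attached to the root. -/
def children : PTree → List PTree
  | node ts => ts

/-- Number of vertices of the `PTree`, i.e. the number `N` of edges of the paper's tree. -/
def size : PTree → ℕ
  | node ts => 1 + (ts.attach.map (fun t => size t.1)).sum
decreasing_by simp [PTree.node.sizeOf_spec]; have := List.sizeOf_lt_of_mem t.2; omega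

/-- The weight `∏_{v ≠ r} w_{σ(v)}`: every vertex `v ≠ r` has degree `outdeg(v) + 1`. -/
noncomputable def weight (w : ℕ → ℝ) : PTree → ℝ
  | node ts => w (ts.length + 1) * (ts.attach.map (fun t => weight w t.1)).prod
decreasing_by simp [PTree.node.sizeOf_spec]; have := List.sizeOf_lt_of_mem t.2; omega

/-- The number of vertices of outdegree `k`, i.e. the number `X_{k+1}` of vertices
(other than `r`) of degree `k+1`. -/
def countOutdeg (k : ℕ) : PTree → ℕ
  | node ts => (if ts.length = k then 1 else 0) + (ts.attach.map (fun t => countOutdeg k t.1)).sum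
decreasing_by simp [PTree.node.sizeOf_spec]; have := List.sizeOf_lt_of_mem t.2; omega

/-- The maximal outdegree of a vertex of the tree. -/
def maxOutdeg : PTree → ℕ
  | node ts => max ts.length ((ts.attach.map (fun t => maxOutdeg t.1)).foldr max 0)
decreasing_by simp [PTree.node.sizeOf_spec]; have := List.sizeOf_lt_of_mem t.2; omega

/-- Outdegree of the first (leftmost) child `s₁` of `s` (0 if there is none). -/
def firstChildOutdeg : PTree → ℕ
  | node [] => 0
  | node (t :: _) => t.children.length

end PTree

/-- The partition function `Z_N = Σ_{τ ∈ Γ_N} ∏_{v ∈ V(τ)∖{r}} w_{σ(v)}`. -/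
noncomputable def Zfun (w : ℕ → ℝ) (N : ℕ) : ℝ :=
  ∑' t : {t : PTree // t.size = N}, t.1.weight w

/-- `ν_N(P)`: probability of the event `P` under the simply generated measure `ν_N`. -/
noncomputable def nu (w : ℕ → ℝ) (N : ℕ) (P : PTree → Prop) : ℝ :=
  (∑' t : {t : PTree // t.size = N ∧ P t}, t.1.weight w) / Zfun w N

/-!
Write `L` for a large constant. If all outdegrees are at most `N / L`, the weight of the tree is at
most `(N / L) ^ (α N)`, and there are at most `4 ^ N` such trees; against the single star, of weight
`((N - 1)!) ^ α`, this is exponentially small. Otherwise some vertex has outdegree larger than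
`N / L`, and a surgery at a vertex of outdegree larger than `K` other than the root `s` makes the
weight much larger.

* *Rerooting.* If the root has bounded outdegree `d`, some other vertex has outdegree `k > N / L`.
  Making that vertex the parent of the remainder of the tree multiplies the weight by
  `((k + 1) / d) ^ α`. At most `L` vertices have outdegree at least `N / L`, so the surgery is
  boundedly many to one.
* *Merging.* If the root and another vertex have outdegrees `d` and `k` with `d + k > N / L`, moving
  all branches of that vertex to the root multiplies the weight by `binom (d + k) k ^ α`, which is
  of order at least `N ^ (j α)` for every fixed `j ≤ min d k`. To undo the surgery one has to know
  `k` and the original position, one of at most `N`. For `k` bounded, `k > K` suffices because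
  `(K + 1) α > 1`; for the at most `N` values `k ≥ M` one uses `M α > 2`.
-/

section Asymptotics

open Topology
open scoped Nat

theorem add_pow_mul_factorial_mul_factorial_le {d k j : ℕ} (hd : j ≤ d) (hk : j ≤ k) :
    (d + k) ^ j * (d ! * k !) ≤ j ! * 2 ^ j * (d + k)! := by
  wlog hkd : k ≤ d generalizing d k
  · simpa [add_comm, mul_comm] using this hk hd (le_of_not_ge hkd)
  have hchoose (i : ℕ) : (d + i).choose d * d ! * i ! = (d + i)! := by
    rw [Nat.choose_symm_add, Nat.add_choose_mul_factorial_mul_factorial]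
  calc (d + k) ^ j * (d ! * k !) ≤ (2 * (d + 1)) ^ j * (d ! * k !) := by gcongr; omega
    _ = 2 ^ j * (d ! * (d + 1) ^ j) * k ! := by rw [mul_pow]; ring
    _ ≤ 2 ^ j * (d + j)! * k ! := by gcongr; exact Nat.factorial_mul_pow_le_factorial
    _ = j ! * 2 ^ j * ((d + j).choose d * d ! * k !) := by rw [← hchoose]; ring
    _ ≤ j ! * 2 ^ j * ((d + k).choose d * d ! * k !) := by gcongr
    _ = j ! * 2 ^ j * (d + k)! := by rw [hchoose]

theorem natDiv_pow_div_factorial_le (n L : ℕ) :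
    ((n / L : ℕ) : ℝ) ^ n / n ! ≤ (Real.exp 1 / L) ^ n :=
  calc ((n / L : ℕ) : ℝ) ^ n / n ! ≤ (n / L : ℝ) ^ n / n ! := by gcongr; exact Nat.cast_div_le
    _ = (n : ℝ) ^ n / n ! / L ^ n := by rw [div_pow, div_right_comm]
    _ ≤ Real.exp n / L ^ n := by gcongr; exact Real.pow_div_factorial_le_exp n n.cast_nonneg n
    _ = (Real.exp 1 / L) ^ n := by rw [div_pow, ← Real.exp_nat_mul, mul_one]

theorem tendsto_rpow_mul_div_pow_rpow {α C p : ℝ} {j : ℕ} (hC : 0 ≤ C) (h : p < j * α) :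
    Tendsto (fun x : ℝ => x ^ p * (C / x ^ j) ^ α) atTop (𝓝 0) := by
  have hlim := (tendsto_rpow_neg_atTop (y := j * α - p) (by linarith)).const_mul (C ^ α)
  rw [mul_zero] at hlim
  refine hlim.congr' ?_
  filter_upwards [eventually_gt_atTop 0] with x hx
  rw [Real.div_rpow hC (by positivity), ← Real.rpow_natCast, ← Real.rpow_mul hx.le, neg_sub,
    Real.rpow_sub hx]
  ring

theorem tendsto_natDiv_add_one_atTop {L : ℕ} (hL : 0 < L) :
    Tendsto (fun n : ℕ => ((n / L : ℕ) : ℝ) + 1) atTop atTop :=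
  tendsto_atTop_add_const_right _ _
    (tendsto_natCast_atTop_atTop.comp (Nat.tendsto_div_const_atTop hL.ne'))

end Asymptotics

section WeightTransport

open Set
open scoped ENNReal

variable {X Y Z : Type*}

theorem tsum_comp_le_of_encard_fiber_le {φ : X → Z} {R : Set X} {T : Set Z} {c : ℕ}
    (g : Z → ℝ≥0∞) (hφ : MapsTo φ R T) (hfiber : ∀ z ∈ T, {x ∈ R | φ x = z}.encard ≤ c) :
    ∑' x : R, g (φ x) ≤ c * ∑' z : T, g z := by
  let ψ : R → T := hφ.restrict
  rw [← ENNReal.tsum_fiberwise _ ψ, ← ENNReal.tsum_mul_left]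
  refine ENNReal.tsum_le_tsum fun z => ?_
  have hcard : (ψ ⁻¹' {z}).encard ≤ c := by
    rw [← Subtype.val_injective.encard_image]
    refine (encard_le_encard ?_).trans (hfiber z z.2)
    rintro _ ⟨x, hx, rfl⟩
    exact ⟨x.2, congrArg Subtype.val hx⟩
  calc ∑' x : ψ ⁻¹' {z}, g (φ x.1)
      = ∑' _ : ψ ⁻¹' {z}, g z := tsum_congr fun x => congrArg (g ∘ Subtype.val) x.2
    _ = (ψ ⁻¹' {z}).encard * g z := ENNReal.tsum_set_const _ _
    _ ≤ c * g z := by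
      gcongr
      exact_mod_cast ENat.toENNReal_mono hcard

theorem tsum_image_le_of_encard_fiber_le {π : X → Y} {φ : X → Z} {R : Set X} {T : Set Z}
    {f : Y → ℝ≥0∞} {g : Z → ℝ≥0∞} {c : ℕ} {r : ℝ≥0∞} (hφ : MapsTo φ R T)
    (hfiber : ∀ z ∈ T, {x ∈ R | φ x = z}.encard ≤ c) (hle : ∀ x ∈ R, f (π x) ≤ r * g (φ x)) :
    ∑' y : π '' R, f y ≤ c * r * ∑' z : T, g z :=
  calc ∑' y : π '' R, f y
      ≤ ∑' x : R, f (π x) := ENNReal.tsum_le_tsum_comp_of_surjective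
        imageFactorization_surjective fun y : π '' R => f y
    _ ≤ ∑' x : R, r * g (φ x) := ENNReal.tsum_le_tsum fun x => hle x x.2
    _ = r * ∑' x : R, g (φ x) := ENNReal.tsum_mul_left
    _ ≤ r * (c * ∑' z : T, g z) := by gcongr; exact tsum_comp_le_of_encard_fiber_le g hφ hfiber
    _ = c * r * ∑' z : T, g z := by ring

end WeightTransport

namespace PTree

open Set
open scoped ENNReal

theorem size_node (ts : List PTree) : (node ts).size = 1 + (ts.map size).sum := by
  rw [size, List.attach_map_val (f := size)]

theorem weight_node (w : ℕ → ℝ) (ts : List PTree) :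
    (node ts).weight w = w (ts.length + 1) * (ts.map (weight w)).prod := by
  rw [weight, List.attach_map_val (f := weight w)]

theorem maxOutdeg_node_le_iff {ts : List PTree} {B : ℕ} :
    (node ts).maxOutdeg ≤ B ↔ ts.length ≤ B ∧ ∀ c ∈ ts, c.maxOutdeg ≤ B := by
  have hfold : ∀ l : List ℕ, l.foldr max 0 ≤ B ↔ ∀ k ∈ l, k ≤ B := fun l => by
    induction l with
    | nil => simp
    | cons k l ih => simp [ih]
  rw [maxOutdeg, List.attach_map_val (f := maxOutdeg), max_le_iff, hfold, List.forall_mem_map]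

theorem node_induction {P : PTree → Prop} (h : ∀ ts, (∀ c ∈ ts, P c) → P (node ts)) :
    ∀ t, P t
  | node ts => h ts fun c _ => node_induction h c

theorem size_pos : ∀ t : PTree, 0 < t.size
  | node ts => by rw [size_node]; omega

theorem length_children_lt_size : ∀ t : PTree, t.children.length < t.size
  | node ts => by
    have h := List.length_le_sum_of_one_le (ts.map size) (by
      simpa using fun c _ => Nat.one_le_iff_ne_zero.2 (size_pos c).ne')
    rw [List.length_map] at h
    rw [size_node, children]
    omega

theorem weight_nonneg {w : ℕ → ℝ} (hw : ∀ n, 0 ≤ w n) (t : PTree) : 0 ≤ t.weight w := by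
  induction t using node_induction with
  | h ts ih =>
    rw [weight_node]
    exact mul_nonneg (hw _) (List.prod_nonneg (by simpa using ih))

theorem weight_le_pow_of_maxOutdeg_le {w : ℕ → ℝ} {q : ℝ} {B : ℕ} (hw : ∀ n, 0 ≤ w n) (hq : 0 ≤ q)
    (hwq : ∀ k ≤ B, w (k + 1) ≤ q ^ k) {t : PTree} (ht : t.maxOutdeg ≤ B) :
    t.weight w ≤ q ^ (t.size - 1) := by
  induction t using node_induction with
  | h ts ih =>
    obtain ⟨hlen, hchildren⟩ := maxOutdeg_node_le_iff.1 ht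
    have hprod (l : List PTree) :
        (l.map fun c => q * q ^ (c.size - 1)).prod = q ^ (l.map size).sum := by
      simp only [mul_pow_sub_one (size_pos _).ne']
      induction l with
      | nil => simp
      | cons c l ih => simp [ih, pow_add]
    calc (node ts).weight w = w (ts.length + 1) * (ts.map (weight w)).prod := weight_node w ts
      _ ≤ q ^ ts.length * (ts.map fun c => q ^ (c.size - 1)).prod := by
        gcongr
        · exact List.prod_nonneg (by simpa using fun c _ => weight_nonneg hw c)
        · exact hwq _ hlen
        · exact List.prod_map_le_prod_map₀ _ _ (fun c _ => weight_nonneg hw c)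
            fun c hc => ih c hc (hchildren c hc)
      _ = q ^ ((node ts).size - 1) := by
        rw [size_node, Nat.add_sub_cancel_left, ← hprod, List.prod_map_mul]
        simp

section Enumeration

/-- The left-child right-sibling correspondence: the children of the root of the planar tree are
read off along the right spine of the binary tree. -/
def ofBinaryTree : BinaryTree Unit → PTree
  | .nil => node []
  | .node _ l r => node (ofBinaryTree l :: (ofBinaryTree r).children)

theorem size_ofBinaryTree (b : BinaryTree Unit) : (ofBinaryTree b).size = b.numNodes + 1 := by
  induction b with
  | nil => simp [ofBinaryTree, size_node]
  | node _ l r hl hr =>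
    obtain ⟨rs, hrs⟩ : ∃ rs, ofBinaryTree r = node rs := by
      cases ofBinaryTree r with | node rs => exact ⟨rs, rfl⟩
    rw [hrs, size_node] at hr
    simp only [ofBinaryTree, hrs, children, size_node, List.map_cons, List.sum_cons, hl,
      BinaryTree.numNodes]
    omega

theorem ofBinaryTree_surjective : Function.Surjective ofBinaryTree := by
  intro t
  induction t using node_induction with
  | h ts ih =>
    induction ts with
    | nil => exact ⟨.nil, rfl⟩
    | cons t ts ihts =>
      obtain ⟨l, hl⟩ := ih t List.mem_cons_self
      obtain ⟨r, hr⟩ := ihts fun c hc => ih c (List.mem_cons_of_mem t hc)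
      exact ⟨.node () l r, by rw [ofBinaryTree, hl, hr, children]⟩

theorem encard_size_eq_le_four_pow (n : ℕ) : {t : PTree | t.size = n + 1}.encard ≤ 4 ^ n := by
  have hsub : {t : PTree | t.size = n + 1} ⊆
      ofBinaryTree '' (BinaryTree.treesOfNumNodesEq n : Set (BinaryTree Unit)) := fun t ht => by
    obtain ⟨b, rfl⟩ := ofBinaryTree_surjective t
    rw [mem_ofPred_eq, size_ofBinaryTree, Nat.add_right_cancel_iff] at ht
    exact mem_image_of_mem _ (BinaryTree.mem_treesOfNumNodesEq.2 ht)
  have hcatalan : catalan n ≤ 4 ^ n := by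
    rw [catalan_eq_centralBinom_div]
    exact (Nat.div_le_self _ _).trans (Nat.centralBinom_le_four_pow n)
  calc {t : PTree | t.size = n + 1}.encard
      ≤ (ofBinaryTree '' (BinaryTree.treesOfNumNodesEq n : Set (BinaryTree Unit))).encard :=
        encard_le_encard hsub
    _ ≤ (BinaryTree.treesOfNumNodesEq n : Set (BinaryTree Unit)).encard := encard_image_le _ _
    _ = (catalan n : ℕ∞) := by
      rw [encard_coe_eq_coe_finsetCard, BinaryTree.treesOfNumNodesEq_card_eq_catalan]
    _ ≤ 4 ^ n := by exact_mod_cast hcatalan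

theorem finite_size_eq : ∀ N : ℕ, {t : PTree | t.size = N}.Finite
  | 0 => finite_empty.subset fun t ht => (size_pos t).ne' ht
  | n + 1 => finite_of_encard_le_coe (k := 4 ^ n) (by exact_mod_cast encard_size_eq_le_four_pow n)

end Enumeration

section Contexts

/-- A one-hole context, i.e. the path from the root to a vertex: each entry records the siblings to
the left and to the right of the next vertex on the path. -/
abbrev Context : Type := List (List PTree × List PTree)

/-- The tree obtained by filling the hole of a context. -/
def plug : Context → PTree → PTree
  | [], s => s
  | (a, b) :: C, s => node (a ++ plug C s :: b)

/-- The vertices of `t`, each encoded as the path leading to it and the list of subtrees hanging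
from it; the length of that list is the outdegree of the vertex. -/
def vertices (t : PTree) : Set (Context × List PTree) := {x | plug x.1 (node x.2) = t}

/-- The total contribution to the weight of the vertices outside the hole. -/
noncomputable def contextWeight (w : ℕ → ℝ) : Context → ℝ
  | [] => 1
  | (a, b) :: C => w (a.length + b.length + 2) *
      ((a.map (weight w)).prod * (b.map (weight w)).prod) * contextWeight w C

theorem size_plug_add_size (C : Context) (s s' : PTree) :
    (plug C s).size + s'.size = (plug C s').size + s.size := by
  induction C with
  | nil => exact Nat.add_comm _ _
  | cons f C ih =>
    simp only [plug, size_node, List.map_append, List.map_cons, List.sum_append, List.sum_cons]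
    omega

theorem weight_plug (w : ℕ → ℝ) (C : Context) (s : PTree) :
    (plug C s).weight w = contextWeight w C * s.weight w := by
  induction C with
  | nil => simp [plug, contextWeight]
  | cons f C ih =>
    simp only [plug, contextWeight, weight_node, List.map_append, List.map_cons, List.prod_append,
      List.prod_cons, ih, List.length_append, List.length_cons]
    ring_nf

theorem vertices_node_subset (ts : List PTree) : (node ts).vertices ⊆
    {([], ts)} ∪ ⋃ i : Fin ts.length,
      (fun x => ((ts.take i, ts.drop (i + 1)) :: x.1, x.2)) '' ts[i].vertices := by
  rintro ⟨_ | ⟨⟨a, b⟩, C⟩, cs⟩ hx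
  · obtain rfl : cs = ts := by simpa [vertices, plug] using hx
    exact Or.inl rfl
  · obtain rfl : a ++ plug C (node cs) :: b = ts := by simpa [vertices, plug] using hx
    refine Or.inr (mem_iUnion.2 ⟨⟨a.length, by simp⟩, (C, cs), by simp [vertices], ?_⟩)
    simp

theorem tsum_vertices_le {h : List PTree → ℝ≥0∞} {g : PTree → ℝ≥0∞}
    (hg : ∀ ts, h ts + (ts.map g).sum ≤ g (node ts)) (t : PTree) :
    ∑' x : t.vertices, h x.1.2 ≤ g t := by
  induction t using node_induction with
  | h ts ih =>
    let f : Context × List PTree → ℝ≥0∞ := fun x => h x.2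
    refine (ENNReal.tsum_mono_subtype f (vertices_node_subset ts)).trans ?_
    calc _ ≤ _ := ENNReal.tsum_union_le f _ _
      _ ≤ h ts + ∑ i : Fin ts.length, g ts[i] := by
        gcongr
        · exact (tsum_singleton (([], ts) : Context × List PTree) f).le
        · refine (ENNReal.tsum_iUnion_le f _).trans (Finset.sum_le_sum fun i _ => ?_)
          have hinj : Function.Injective fun x : Context × List PTree =>
              ((ts.take i, ts.drop (i + 1)) :: x.1, x.2) := by
            rintro ⟨C, cs⟩ ⟨C', cs'⟩ hx
            simpa using hx
          rw [tsum_image f hinj.injOn]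
          exact ih _ (List.getElem_mem _)
      _ = h ts + (ts.map g).sum := by rw [← Fin.sum_univ_fun_getElem]; rfl
      _ ≤ g (node ts) := hg ts

theorem encard_vertices_le (t : PTree) : t.vertices.encard ≤ t.size := by
  have h := tsum_vertices_le (h := fun _ => 1) (g := fun t => (t.size : ℝ≥0∞)) (fun ts => by
    simp [size_node, Function.comp_def]) t
  rw [ENNReal.tsum_set_one] at h
  exact_mod_cast h

theorem encard_vertices_le_length_mul_le_size (t : PTree) (b : ℕ) :
    {x ∈ t.vertices | b ≤ x.2.length}.encard * b ≤ (t.size : ℕ∞) := by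
  let h : List PTree → ℝ≥0∞ := fun ts => if b ≤ ts.length then b else 0
  have hg (ts : List PTree) :
      h ts + (ts.map fun c => ((c.size - 1 : ℕ) : ℝ≥0∞)).sum ≤ ((node ts).size - 1 : ℕ) := by
    have hh : h ts ≤ (ts.length : ℝ≥0∞) := by
      simp only [h]
      split_ifs with hb
      · exact_mod_cast hb
      · exact zero_le
    have hsum (l : List PTree) : l.length + (l.map fun c => c.size - 1).sum = (l.map size).sum := by
      induction l with
      | nil => rfl
      | cons c l ih =>
        have := c.size_pos
        simp only [List.length_cons, List.map_cons, List.sum_cons]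
        omega
    rw [size_node, Nat.add_sub_cancel_left, ← hsum]
    push_cast
    simpa [Function.comp_def] using add_le_add_left hh _
  let f : Context × List PTree → ℝ≥0∞ := fun x => h x.2
  suffices ({x ∈ t.vertices | b ≤ x.2.length}.encard : ℝ≥0∞) * b ≤ t.size by exact_mod_cast this
  calc _ = ∑' x : {x ∈ t.vertices | b ≤ x.2.length}, f x := by
        rw [← ENNReal.tsum_set_const]
        exact tsum_congr fun x => (if_pos x.2.2).symm
    _ ≤ ∑' x : t.vertices, f x := ENNReal.tsum_mono_subtype f (sep_subset _ _)
    _ ≤ (t.size - 1 : ℕ) := tsum_vertices_le hg t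
    _ ≤ t.size := by gcongr; exact Nat.sub_le _ _

theorem encard_vertices_le_length_le {t : PTree} {b L : ℕ} (hb : 0 < b) (ht : t.size ≤ L * b) :
    {x ∈ t.vertices | b ≤ x.2.length}.encard ≤ L := by
  rw [← ENat.mul_le_mul_right_iff (a := b) (by simpa using hb.ne') (ENat.natCast_ne_top b)]
  exact (encard_vertices_le_length_mul_le_size t b).trans (by exact_mod_cast ht)

theorem exists_vertex_of_lt_maxOutdeg {B : ℕ} {t : PTree} (ht : B < t.maxOutdeg) :
    ∃ x ∈ t.vertices, B < x.2.length := by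
  induction t using node_induction with
  | h ts ih =>
    rw [← not_le, maxOutdeg_node_le_iff] at ht
    by_cases hlen : ts.length ≤ B
    · obtain ⟨c, hc, hcB⟩ : ∃ c ∈ ts, B < c.maxOutdeg := by simpa [hlen] using ht
      obtain ⟨⟨C, cs⟩, rfl, hcs⟩ := ih c hc hcB
      obtain ⟨a, b, rfl⟩ := List.append_of_mem hc
      exact ⟨((a, b) :: C, cs), rfl, hcs⟩
    · exact ⟨([], ts), rfl, not_le.1 hlen⟩

end Contexts

/-- A planar tree with a distinguished vertex other than the root: `path` leads to it from the child
of the root above it, `left` and `right` are the siblings of that child, and `branches` are the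
subtrees hanging from the distinguished vertex. -/
structure MarkedTree where
  left : List PTree
  right : List PTree
  path : Context
  branches : List PTree

namespace MarkedTree

/-- The underlying tree, with the distinguished vertex forgotten. -/
def tree (m : MarkedTree) : PTree := node (m.left ++ plug m.path (node m.branches) :: m.right)

/-- The outdegree of the root of the underlying tree. -/
def rootOutdeg (m : MarkedTree) : ℕ := m.left.length + m.right.length + 1

/-- The total contribution to the weight of the vertices other than the root and the distinguished
vertex. -/
noncomputable def residualWeight (w : ℕ → ℝ) (m : MarkedTree) : ℝ :=
  (m.left.map (weight w)).prod * (m.right.map (weight w)).prod * contextWeight w m.path *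
    (m.branches.map (weight w)).prod

/-- Detach the path to the distinguished vertex from the root and hang the remainder of the tree,
root included, as a last branch from the distinguished vertex: one unit of outdegree passes from the
root to the distinguished vertex. -/
def reroot (m : MarkedTree) : PTree :=
  plug m.path (node (m.branches ++ [node (m.left ++ m.right)]))

/-- Move all the branches of the distinguished vertex to the right end of the root. -/
def merge (m : MarkedTree) : PTree :=
  node ((m.left ++ plug m.path (node []) :: m.right) ++ m.branches)

theorem length_children_tree (m : MarkedTree) : m.tree.children.length = m.rootOutdeg := by
  simp only [tree, children, rootOutdeg, List.length_append, List.length_cons]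
  omega

theorem size_reroot (m : MarkedTree) : m.reroot.size = m.tree.size := by
  have := size_plug_add_size m.path (node m.branches)
    (node (m.branches ++ [node (m.left ++ m.right)]))
  simp only [reroot, tree, size_node, List.map_append, List.map_cons, List.map_nil, List.sum_append,
    List.sum_cons, List.sum_nil] at this ⊢
  omega

theorem size_merge (m : MarkedTree) : m.merge.size = m.tree.size := by
  have := size_plug_add_size m.path (node m.branches) (node [])
  simp only [merge, tree, size_node, List.map_append, List.map_cons, List.map_nil, List.sum_append,
    List.sum_cons, List.sum_nil] at this ⊢
  omega

variable (w : ℕ → ℝ)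

theorem weight_tree (m : MarkedTree) : m.tree.weight w =
    w (m.rootOutdeg + 1) * w (m.branches.length + 1) * m.residualWeight w := by
  simp only [tree, rootOutdeg, residualWeight, weight_node, weight_plug, List.map_append,
    List.map_cons, List.prod_append, List.prod_cons, List.length_append, List.length_cons]
  ring_nf

theorem weight_reroot (m : MarkedTree) : m.reroot.weight w =
    w m.rootOutdeg * w (m.branches.length + 2) * m.residualWeight w := by
  simp only [reroot, rootOutdeg, residualWeight, weight_node, weight_plug, List.map_append,
    List.map_cons, List.map_nil, List.prod_append, List.prod_cons, List.prod_nil,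
    List.length_append, List.length_cons, List.length_nil]
  ring_nf

theorem weight_merge (m : MarkedTree) : m.merge.weight w =
    w (m.rootOutdeg + m.branches.length + 1) * w 1 * m.residualWeight w := by
  simp only [merge, rootOutdeg, residualWeight, weight_node, weight_plug, List.map_append,
    List.map_cons, List.map_nil, List.prod_append, List.prod_cons, List.prod_nil,
    List.length_append, List.length_cons, List.length_nil]
  ring_nf

variable {w}

theorem residualWeight_nonneg (hw : ∀ n, 0 ≤ w n) (m : MarkedTree) : 0 ≤ m.residualWeight w := by
  have hforest : ∀ ts : List PTree, 0 ≤ (ts.map (weight w)).prod := fun ts =>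
    List.prod_nonneg (by simpa using fun c _ => weight_nonneg hw c)
  have hcontext : ∀ C : Context, 0 ≤ contextWeight w C := fun C => by
    induction C with
    | nil => exact zero_le_one
    | cons f C ih => exact mul_nonneg (mul_nonneg (hw _) (mul_nonneg (hforest _) (hforest _))) ih
  exact mul_nonneg (mul_nonneg (mul_nonneg (hforest _) (hforest _)) (hcontext _)) (hforest _)

theorem exists_tree_eq_of_lt_maxOutdeg {t c : PTree} {B : ℕ} (hc : c ∈ t.children)
    (hB : B < c.maxOutdeg) : ∃ m : MarkedTree, m.tree = t ∧ B < m.branches.length := by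
  obtain ⟨⟨C, cs⟩, rfl, hcs⟩ := exists_vertex_of_lt_maxOutdeg hB
  obtain ⟨ts⟩ := t
  obtain ⟨a, b, rfl⟩ := List.append_of_mem hc
  exact ⟨⟨a, b, C, cs⟩, rfl, hcs⟩

/-- The marked trees on which `reroot` is favourable: a root of outdegree at most `M`, and a
distinguished vertex of outdegree at least `B`, to be thought of as much larger than `M`. -/
def rerootable (M B : ℕ) : Set MarkedTree := {m | m.rootOutdeg ≤ M ∧ B ≤ m.branches.length}

/-- The marked trees on which `merge` is favourable: the root and the distinguished vertex have
outdegree at least `j`, and more than `B` in total. The number of ways to undo the surgery is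
controlled by the bound `l` on the outdegree of the distinguished vertex. -/
def mergeable (j l B : ℕ) : Set MarkedTree :=
  {m | j ≤ m.rootOutdeg ∧ j ≤ m.branches.length ∧ m.branches.length < l ∧
    B < m.rootOutdeg + m.branches.length}

theorem encard_reroot_fiber_le {t : PTree} {B L M : ℕ} (ht : t.size ≤ L * (B + 1)) :
    {m ∈ rerootable M B | m.reroot = t}.encard ≤ (M * L : ℕ) := by
  let F : MarkedTree → ℕ × Context × List PTree := fun m =>
    (m.left.length, m.path, m.branches ++ [node (m.left ++ m.right)])
  have hinj : Function.Injective F := by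
    rintro ⟨a, b, C, cs⟩ ⟨a', b', C', cs'⟩ h
    simp only [F, Prod.mk.injEq] at h
    obtain ⟨hlen, rfl, h⟩ := h
    obtain ⟨rfl, h⟩ := List.append_inj' h rfl
    obtain ⟨rfl, rfl⟩ := List.append_inj (by simpa using h) hlen
    rfl
  calc _ ≤ (Iio M ×ˢ {x ∈ t.vertices | B + 1 ≤ x.2.length}).encard := by
        refine encard_le_encard_of_injOn (f := F) (fun m hm => ?_) hinj.injOn
        obtain ⟨⟨hM, hB⟩, rfl⟩ := hm
        simp only [rootOutdeg] at hM
        exact ⟨by simp only [F, mem_Iio]; omega, rfl, by simpa [F] using hB⟩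
    _ = M * {x ∈ t.vertices | B + 1 ≤ x.2.length}.encard := by
        rw [encard_prod, ← Finset.coe_Iio, encard_coe_eq_coe_finsetCard, Nat.card_Iio]
    _ ≤ (M * L : ℕ) := by
        push_cast
        gcongr
        exact encard_vertices_le_length_le B.succ_pos ht

theorem encard_merge_fiber_le_of_length_eq (t : PTree) (k : ℕ) :
    {m : MarkedTree | m.branches.length = k ∧ m.merge = t}.encard ≤ t.size := by
  obtain ⟨ts⟩ := t
  let u : PTree := node (ts.take (ts.length - k))
  have hu : u.size ≤ (node ts).size := by
    have := congrArg (fun l => (l.map size).sum) (List.take_append_drop (ts.length - k) ts)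
    simp only [List.map_append, List.sum_append] at this
    simp only [u, size_node]
    omega
  let F : MarkedTree → Context × List PTree := fun m => ((m.left, m.right) :: m.path, [])
  calc _ ≤ u.vertices.encard := by
        refine encard_le_encard_of_injOn (f := F) ?_ ?_
        · rintro m ⟨rfl, hm⟩
          obtain rfl := node.inj hm
          change node _ = node _
          rw [List.length_append, Nat.add_sub_cancel, List.take_left]
        · rintro ⟨a, b, C, cs⟩ ⟨-, hm⟩ ⟨a', b', C', cs'⟩ ⟨-, hm'⟩ h
          simp only [F, Prod.mk.injEq, List.cons.injEq, and_true] at h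
          obtain ⟨⟨rfl, rfl⟩, rfl⟩ := h
          obtain rfl := List.append_cancel_left (node.inj (hm.trans hm'.symm))
          rfl
    _ ≤ u.size := encard_vertices_le u
    _ ≤ (node ts).size := by exact_mod_cast hu

theorem encard_merge_fiber_le (t : PTree) (j l B : ℕ) :
    {m ∈ mergeable j l B | m.merge = t}.encard ≤ (l * t.size : ℕ) := by
  have hcover : {m ∈ mergeable j l B | m.merge = t} ⊆
      ⋃ k ∈ Finset.range l, {m : MarkedTree | m.branches.length = k ∧ m.merge = t} :=
    fun m hm => mem_iUnion₂.2 ⟨m.branches.length, Finset.mem_range.2 hm.1.2.2.1, rfl, hm.2⟩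
  refine (encard_le_encard hcover).trans ?_
  calc _ ≤ _ := Finset.set_encard_biUnion_le _ _
    _ ≤ ∑ _k ∈ Finset.range l, (t.size : ℕ∞) :=
      Finset.sum_le_sum fun k _ => encard_merge_fiber_le_of_length_eq t k
    _ = (l * t.size : ℕ) := by simp

theorem branches_length_lt_size (m : MarkedTree) : m.branches.length < m.tree.size := by
  have h := m.merge.length_children_lt_size
  rw [size_merge] at h
  refine lt_of_le_of_lt ?_ h
  simp only [merge, children, List.length_append]
  exact Nat.le_add_left _ _

theorem maxOutdeg_le_or_mem_image {t c : PTree} {B K M : ℕ} (hMB : M ≤ B) (hc : c ∈ t.children)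
    (hcK : K < c.maxOutdeg) :
    t.maxOutdeg ≤ B ∨ t ∈ tree '' rerootable M B ∨ t ∈ tree '' mergeable (K + 1) M B ∨
      t ∈ tree '' mergeable M t.size B := by
  by_cases hroot : t.children.length ≤ B
  · by_cases ht : t.maxOutdeg ≤ B
    · exact Or.inl ht
    obtain ⟨c', hc', hcB⟩ : ∃ c' ∈ t.children, B < c'.maxOutdeg := by
      cases t with
      | node ts =>
        rw [children] at hroot ⊢
        simpa [maxOutdeg_node_le_iff, hroot] using ht
    obtain ⟨m, rfl, hm⟩ := exists_tree_eq_of_lt_maxOutdeg hc' hcB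
    rcases le_total m.rootOutdeg M with hM | hM
    · exact Or.inr (Or.inl ⟨m, ⟨hM, hm.le⟩, rfl⟩)
    · exact Or.inr (Or.inr (Or.inr
        ⟨m, ⟨hM, hMB.trans hm.le, m.branches_length_lt_size, by omega⟩, rfl⟩))
  · obtain ⟨m, rfl, hm⟩ := exists_tree_eq_of_lt_maxOutdeg hc hcK
    rw [length_children_tree, not_le] at hroot
    rcases lt_or_ge m.branches.length M with hM | hM
    · exact Or.inr (Or.inr (Or.inl ⟨m, ⟨by omega, hm, hM, by omega⟩, rfl⟩))
    · exact Or.inr (Or.inr (Or.inr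
        ⟨m, ⟨by omega, hM, m.branches_length_lt_size, by omega⟩, rfl⟩))

end MarkedTree

section Probability

variable {w : ℕ → ℝ}

/-- The numerator of `nu`, as an extended nonnegative real: the total weight of a set of trees. -/
noncomputable def totalWeight (w : ℕ → ℝ) (S : Set PTree) : ℝ≥0∞ :=
  ∑' t : S, ENNReal.ofReal (t.1.weight w)

theorem totalWeight_le_mul_encard {S : Set PTree} {r : ℝ} (hr : ∀ t ∈ S, t.weight w ≤ r) :
    totalWeight w S ≤ S.encard * ENNReal.ofReal r :=
  (ENNReal.tsum_le_tsum fun t : S => ENNReal.ofReal_le_ofReal (hr t.1 t.2)).trans_eq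
    (ENNReal.tsum_set_const _ _)

theorem totalWeight_mono {S T : Set PTree} (h : S ⊆ T) : totalWeight w S ≤ totalWeight w T :=
  ENNReal.tsum_mono_subtype (fun t : PTree => ENNReal.ofReal (t.weight w)) h

theorem totalWeight_union_le (S T : Set PTree) :
    totalWeight w (S ∪ T) ≤ totalWeight w S + totalWeight w T :=
  ENNReal.tsum_union_le (fun t : PTree => ENNReal.ofReal (t.weight w)) S T

theorem totalWeight_ne_top {S : Set PTree} {N : ℕ} (hS : S ⊆ {t | t.size = N}) :
    totalWeight w S ≠ ∞ := by
  have := ((finite_size_eq N).subset hS).fintype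
  rw [totalWeight, tsum_fintype]
  exact ENNReal.sum_ne_top.2 fun t _ => ENNReal.ofReal_ne_top

theorem toReal_totalWeight (hw : ∀ n, 0 ≤ w n) (S : Set PTree) :
    (totalWeight w S).toReal = ∑' t : S, t.1.weight w := by
  rw [totalWeight, ENNReal.tsum_toReal_eq fun _ => ENNReal.ofReal_ne_top]
  exact tsum_congr fun t => ENNReal.toReal_ofReal (weight_nonneg hw t)

theorem nu_eq_toReal_div (hw : ∀ n, 0 ≤ w n) (N : ℕ) (P : PTree → Prop) :
    nu w N P =
      (totalWeight w {t | t.size = N ∧ P t}).toReal / (totalWeight w {t | t.size = N}).toReal := by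
  rw [toReal_totalWeight hw, toReal_totalWeight hw]
  rfl

theorem nu_nonneg (hw : ∀ n, 0 ≤ w n) (N : ℕ) (P : PTree → Prop) : 0 ≤ nu w N P := by
  rw [nu_eq_toReal_div hw]
  positivity

theorem nu_le_nu_add_nu (hw : ∀ n, 0 ≤ w n) {N : ℕ} {P Q R : PTree → Prop}
    (h : ∀ t, t.size = N → P t → Q t ∨ R t) : nu w N P ≤ nu w N Q + nu w N R := by
  have hsub : {t | t.size = N ∧ P t} ⊆ {t | t.size = N ∧ Q t} ∪ {t | t.size = N ∧ R t} :=
    fun t ⟨ht, hP⟩ => (h t ht hP).imp (⟨ht, ·⟩) (⟨ht, ·⟩)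
  have hQ : totalWeight w {t | t.size = N ∧ Q t} ≠ ∞ := totalWeight_ne_top fun t ht => ht.1
  have hR : totalWeight w {t | t.size = N ∧ R t} ≠ ∞ := totalWeight_ne_top fun t ht => ht.1
  simp only [nu_eq_toReal_div hw, ← add_div, ← ENNReal.toReal_add hQ hR]
  gcongr
  · exact ENNReal.add_ne_top.2 ⟨hQ, hR⟩
  · exact totalWeight_mono hsub |>.trans (totalWeight_union_le _ _)

theorem nu_le_of_totalWeight_le (hw : ∀ n, 0 ≤ w n) {N : ℕ} {P : PTree → Prop} {r : ℝ} (hr : 0 ≤ r)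
    (h : totalWeight w {t | t.size = N ∧ P t} ≤
      ENNReal.ofReal r * totalWeight w {t | t.size = N}) : nu w N P ≤ r := by
  rw [nu_eq_toReal_div hw]
  refine div_le_of_le_mul₀ ENNReal.toReal_nonneg hr ?_
  have hne := ENNReal.mul_ne_top (ENNReal.ofReal_ne_top (r := r))
    (totalWeight_ne_top (w := w) (Subset.refl {t : PTree | t.size = N}))
  simpa [ENNReal.toReal_mul, ENNReal.toReal_ofReal hr] using ENNReal.toReal_mono hne h

theorem nu_le_of_surgery (hw : ∀ n, 0 ≤ w n) {N c : ℕ} {r : ℝ} (hr : 0 ≤ r)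
    {φ : MarkedTree → PTree} {R : Set MarkedTree} (hsize : ∀ m, (φ m).size = m.tree.size)
    (hfiber : ∀ t : PTree, t.size = N → {m ∈ R | φ m = t}.encard ≤ c)
    (hle : ∀ m ∈ R, m.tree.weight w ≤ r * (φ m).weight w) :
    nu w N (· ∈ MarkedTree.tree '' R) ≤ c * r := by
  let R' : Set MarkedTree := {m ∈ R | m.tree.size = N}
  have hevent : {t | t.size = N ∧ t ∈ MarkedTree.tree '' R} ⊆ MarkedTree.tree '' R' := by
    rintro _ ⟨ht, m, hm, rfl⟩
    exact ⟨m, ⟨hm, ht⟩, rfl⟩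
  refine nu_le_of_totalWeight_le hw (by positivity) ?_
  calc _ ≤ totalWeight w (MarkedTree.tree '' R') := totalWeight_mono hevent
    _ ≤ c * ENNReal.ofReal r * totalWeight w {t | t.size = N} := by
      let W : PTree → ℝ≥0∞ := fun t => ENNReal.ofReal (t.weight w)
      refine tsum_image_le_of_encard_fiber_le (T := {t : PTree | t.size = N}) (f := W) (g := W)
        (fun m hm => (hsize m).trans hm.2)
        (fun t ht => (encard_le_encard fun m hm => ?_).trans (hfiber t ht)) fun m hm => ?_
      · exact ⟨hm.1.1, hm.2⟩
      · rw [← ENNReal.ofReal_mul hr]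
        exact ENNReal.ofReal_le_ofReal (hle m hm.1)
    _ = _ := by rw [ENNReal.ofReal_mul c.cast_nonneg, ENNReal.ofReal_natCast]

theorem weight_star (w : ℕ → ℝ) (n : ℕ) :
    (node (List.replicate n (node []))).weight w = w (n + 1) * w 1 ^ n := by
  simp [weight_node]

theorem nu_maxOutdeg_le_le (hw : ∀ n, 0 ≤ w n) (hw1 : w 1 = 1) {n B : ℕ} {q : ℝ} (hq : 0 ≤ q)
    (hwn : 0 < w (n + 1)) (hwq : ∀ k ≤ B, w (k + 1) ≤ q ^ k) :
    nu w (n + 1) (·.maxOutdeg ≤ B) ≤ (4 * q) ^ n / w (n + 1) := by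
  refine nu_le_of_totalWeight_le hw (by positivity) ?_
  have hstar : ENNReal.ofReal (w (n + 1)) ≤ totalWeight w {t | t.size = n + 1} := by
    have hsize : (node (List.replicate n (node []))).size = n + 1 := by simp [size_node, add_comm]
    simpa [totalWeight, weight_star, hw1] using
      ENNReal.le_tsum (f := fun t : {t : PTree | t.size = n + 1} => ENNReal.ofReal (t.1.weight w))
        ⟨_, hsize⟩
  calc _ ≤ {t : PTree | t.size = n + 1 ∧ t.maxOutdeg ≤ B}.encard * ENNReal.ofReal (q ^ n) := by
        refine totalWeight_le_mul_encard ?_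
        rintro t ⟨ht, hB⟩
        simpa [ht] using weight_le_pow_of_maxOutdeg_le hw hq hwq hB
    _ ≤ ((4 ^ n : ℕ∞) : ℝ≥0∞) * ENNReal.ofReal (q ^ n) := by
        gcongr
        exact (encard_le_encard fun t ht => ht.1).trans (encard_size_eq_le_four_pow n)
    _ = ENNReal.ofReal ((4 * q) ^ n / w (n + 1)) * ENNReal.ofReal (w (n + 1)) := by
        rw [← ENNReal.ofReal_mul (by positivity), div_mul_cancel₀ _ hwn.ne', mul_pow,
          ENNReal.ofReal_mul (by positivity), ENNReal.ofReal_pow (by positivity)]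
        simp
    _ ≤ _ := by gcongr

open MarkedTree in
theorem nu_lt_maxOutdeg_child_le (hw : ∀ n, 0 ≤ w n) {N B K M : ℕ} (hMB : M ≤ B) :
    nu w N (fun t => ∃ c ∈ t.children, K < c.maxOutdeg) ≤
      nu w N (·.maxOutdeg ≤ B) + (nu w N (· ∈ tree '' rerootable M B) +
        (nu w N (· ∈ tree '' mergeable (K + 1) M B) + nu w N (· ∈ tree '' mergeable M N B))) := by
  refine (nu_le_nu_add_nu hw ?_).trans (add_le_add_right ((nu_le_nu_add_nu hw fun _ _ => id).trans
    (add_le_add_right (nu_le_nu_add_nu hw fun _ _ => id) _)) _)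
  rintro t rfl ⟨c, hc, hcK⟩
  exact maxOutdeg_le_or_mem_image hMB hc hcK

end Probability

section FactorialWeight

open Topology
open scoped Nat

/-- The weight sequence of the theorem, with value `(k !) ^ α` at a vertex of outdegree `k`, that is
at `k + 1`; truncated subtraction gives the irrelevant value `1` at `0`. -/
noncomputable def factorialWeight (α : ℝ) (n : ℕ) : ℝ := ((n - 1)! : ℝ) ^ α

variable {α : ℝ}

theorem factorialWeight_pos (α : ℝ) (n : ℕ) : 0 < factorialWeight α n :=
  Real.rpow_pos_of_pos (by positivity) α

theorem factorialWeight_nonneg (α : ℝ) (n : ℕ) : 0 ≤ factorialWeight α n :=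
  (factorialWeight_pos α n).le

theorem factorialWeight_one (α : ℝ) : factorialWeight α 1 = 1 := by simp [factorialWeight]

theorem factorialWeight_mul_le (hα : 0 ≤ α) {a b c d : ℕ} {r : ℝ} (hr : 0 ≤ r)
    (h : ((a ! * b ! : ℕ) : ℝ) ≤ r * (c ! * d ! : ℕ)) :
    factorialWeight α (a + 1) * factorialWeight α (b + 1) ≤
      r ^ α * (factorialWeight α (c + 1) * factorialWeight α (d + 1)) := by
  have hmul (i j : ℕ) :
      factorialWeight α (i + 1) * factorialWeight α (j + 1) = ((i ! * j ! : ℕ) : ℝ) ^ α := by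
    simp [factorialWeight, Real.mul_rpow]
  rw [hmul, hmul, ← Real.mul_rpow hr (by positivity)]
  gcongr

theorem factorialWeight_succ_le (hα : 0 ≤ α) {k B : ℕ} (hk : k ≤ B) :
    factorialWeight α (k + 1) ≤ ((B : ℝ) ^ α) ^ k := by
  have hfactorial : (k ! : ℝ) ≤ (B : ℝ) ^ k := by
    exact_mod_cast (Nat.factorial_le_pow k).trans (Nat.pow_le_pow_left hk k)
  rw [Real.rpow_pow_comm (by positivity)]
  exact Real.rpow_le_rpow (by positivity) hfactorial hα

theorem nu_maxOutdeg_le_div_le (hα : 0 < α) {L : ℕ} (hL : Real.exp 1 * 8 ^ (1 / α) ≤ L) (n : ℕ) :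
    nu (factorialWeight α) (n + 1) (·.maxOutdeg ≤ n / L) ≤ (1 / 2) ^ n := by
  have hL0 : (0 : ℝ) < L := lt_of_lt_of_le (by positivity) hL
  have heighth : (Real.exp 1 / L) ^ α ≤ 1 / 8 := by
    calc (Real.exp 1 / L) ^ α ≤ (1 / 8 ^ (1 / α)) ^ α := by
          refine Real.rpow_le_rpow (by positivity) ?_ hα.le
          rwa [div_le_div_iff₀ hL0 (by positivity), one_mul]
      _ = 1 / 8 := by
          rw [Real.div_rpow (by positivity) (by positivity), ← Real.rpow_mul (by norm_num),
            one_div_mul_cancel hα.ne', Real.one_rpow, Real.rpow_one]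
  calc _ ≤ (4 * ((n / L : ℕ) : ℝ) ^ α) ^ n / factorialWeight α (n + 1) :=
        nu_maxOutdeg_le_le (factorialWeight_nonneg α) (factorialWeight_one α) (by positivity)
          (factorialWeight_pos α _) fun _ => factorialWeight_succ_le hα.le
    _ = 4 ^ n * (((n / L : ℕ) : ℝ) ^ n / n !) ^ α := by
        rw [mul_pow, Real.rpow_pow_comm (by positivity), mul_div_assoc,
          Real.div_rpow (by positivity) (by positivity)]
        rfl
    _ ≤ 4 ^ n * ((Real.exp 1 / L) ^ n) ^ α := by
        gcongr
        exact natDiv_pow_div_factorial_le n L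
    _ = (4 * (Real.exp 1 / L) ^ α) ^ n := by rw [mul_pow, Real.rpow_pow_comm (by positivity)]
    _ ≤ (4 * (1 / 8)) ^ n := by gcongr
    _ = (1 / 2) ^ n := by norm_num

open MarkedTree

theorem nu_rerootable_le (hα : 0 ≤ α) {N L M B : ℕ} (hN : N ≤ L * (B + 1)) :
    nu (factorialWeight α) N (· ∈ tree '' rerootable M B) ≤
      (M * L : ℕ) * (M / (B + 1) : ℝ) ^ α := by
  refine nu_le_of_surgery (factorialWeight_nonneg α) (by positivity) size_reroot
    (fun t ht => encard_reroot_fiber_le (by rwa [ht])) ?_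
  rintro m ⟨hM, hB⟩
  obtain ⟨d, hd⟩ : ∃ d, m.rootOutdeg = d + 1 := ⟨_, rfl⟩
  have hratio : (((d + 1)! * m.branches.length ! : ℕ) : ℝ) ≤
      M / (B + 1) * (d ! * (m.branches.length + 1)! : ℕ) := by
    have h : ((d + 1) * (B + 1) : ℝ) ≤ M * (m.branches.length + 1) := by
      exact_mod_cast Nat.mul_le_mul (hd ▸ hM) (Nat.succ_le_succ hB)
    rw [div_mul_eq_mul_div, le_div_iff₀ (by positivity), Nat.factorial_succ, Nat.factorial_succ]
    push_cast
    calc _ = d ! * (m.branches.length)! * ((d + 1) * (B + 1) : ℝ) := by ring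
      _ ≤ d ! * (m.branches.length)! * (M * (m.branches.length + 1)) := by gcongr
      _ = _ := by ring
  rw [weight_tree, weight_reroot, hd, ← mul_assoc]
  exact mul_le_mul_of_nonneg_right (factorialWeight_mul_le hα (by positivity) hratio)
    (m.residualWeight_nonneg (factorialWeight_nonneg α))

theorem nu_mergeable_le (hα : 0 ≤ α) (N j l B : ℕ) :
    nu (factorialWeight α) N (· ∈ tree '' mergeable j l B) ≤
      (l * N : ℕ) * (j ! * 2 ^ j / (B + 1) ^ j : ℝ) ^ α := by
  refine nu_le_of_surgery (factorialWeight_nonneg α) (by positivity) size_merge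
    (fun t ht => ht ▸ encard_merge_fiber_le t j l B) ?_
  rintro m ⟨hd, hk, -, hB⟩
  have hratio : ((m.rootOutdeg ! * m.branches.length ! : ℕ) : ℝ) ≤
      j ! * 2 ^ j / (B + 1) ^ j * ((m.rootOutdeg + m.branches.length)! * 0 ! : ℕ) := by
    have hpow : (B + 1) ^ j ≤ (m.rootOutdeg + m.branches.length) ^ j := Nat.pow_le_pow_left hB j
    rw [div_mul_eq_mul_div, le_div_iff₀' (by positivity), Nat.factorial_zero, mul_one]
    exact_mod_cast (Nat.mul_le_mul_right _ hpow).trans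
      (add_pow_mul_factorial_mul_factorial_le hd hk)
  rw [weight_tree, weight_merge, ← mul_assoc]
  exact mul_le_mul_of_nonneg_right (factorialWeight_mul_le hα (by positivity) hratio)
    (m.residualWeight_nonneg (factorialWeight_nonneg α))

theorem tendsto_nu_maxOutdeg_le_div (hα : 0 < α) {L : ℕ} (hL : Real.exp 1 * 8 ^ (1 / α) ≤ L) :
    Tendsto (fun n => nu (factorialWeight α) (n + 1) (·.maxOutdeg ≤ n / L)) atTop (𝓝 0) :=
  squeeze_zero (fun _ => nu_nonneg (factorialWeight_nonneg α) _ _) (nu_maxOutdeg_le_div_le hα hL)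
    (tendsto_pow_atTop_nhds_zero_of_lt_one (by norm_num) (by norm_num))

theorem tendsto_nu_rerootable (hα : 0 < α) {L : ℕ} (hL : 0 < L) (M : ℕ) :
    Tendsto (fun n => nu (factorialWeight α) (n + 1) (· ∈ tree '' rerootable M (n / L)))
      atTop (𝓝 0) := by
  refine squeeze_zero (fun _ => nu_nonneg (factorialWeight_nonneg α) _ _)
    (fun n => nu_rerootable_le hα.le (Nat.lt_mul_div_succ n hL)) ?_
  have hlim := (tendsto_rpow_mul_div_pow_rpow (α := α) (C := M) (p := 0) (j := 1) M.cast_nonneg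
    (by simpa)).comp (tendsto_natDiv_add_one_atTop hL)
  simpa using hlim.const_mul ((M * L : ℕ) : ℝ)

theorem tendsto_nu_mergeable (hα : 0 < α) {L j : ℕ} (hL : 0 < L) {l : ℕ → ℕ} {C p : ℝ}
    (hl : ∀ n, (l n : ℝ) ≤ C * ((n / L : ℕ) + 1) ^ p) (hp : p + 1 < j * α) :
    Tendsto (fun n => nu (factorialWeight α) (n + 1) (· ∈ tree '' mergeable j (l n) (n / L)))
      atTop (𝓝 0) := by
  have hlim := (tendsto_rpow_mul_div_pow_rpow (C := j ! * 2 ^ j) (by positivity) hp).comp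
    (tendsto_natDiv_add_one_atTop hL)
  refine squeeze_zero (fun _ => nu_nonneg (factorialWeight_nonneg α) _ _) (fun n => ?_)
    (by simpa using hlim.const_mul (C * L))
  have hn : ((n + 1 : ℕ) : ℝ) ≤ L * ((n / L : ℕ) + 1) := by
    exact_mod_cast Nat.lt_mul_div_succ n hL
  refine (nu_mergeable_le hα.le (n + 1) j (l n) (n / L)).trans ?_
  rw [Real.rpow_add_one (by positivity), ← mul_assoc]
  gcongr
  calc ((l n * (n + 1) : ℕ) : ℝ)
      ≤ C * ((n / L : ℕ) + 1) ^ p * (L * ((n / L : ℕ) + 1)) := by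
        rw [Nat.cast_mul]
        exact mul_le_mul (hl n) hn (by positivity) ((Nat.cast_nonneg _).trans (hl n))
    _ = _ := by ring

end FactorialWeight

end PTree

theorem stmt_12_general (α : ℝ) (h0 : 0 < α) :
    Tendsto (fun N : ℕ =>
        nu (fun n => ((n - 1).factorial : ℝ) ^ α) N
          (fun t => ∃ c ∈ t.children, ⌊1 / α⌋₊ < c.maxOutdeg))
      atTop (nhds 0) := by
  change Tendsto (fun N => nu (PTree.factorialWeight α) N _) atTop (nhds 0)
  obtain ⟨L, hL⟩ := exists_nat_ge (Real.exp 1 * 8 ^ (1 / α))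
  have hL0 : 0 < L := Nat.cast_pos.1 (lt_of_lt_of_le (by positivity) hL)
  obtain ⟨M, hM⟩ := exists_nat_gt (2 / α)
  have hK : 0 + 1 < ((⌊1 / α⌋₊ + 1 : ℕ) : ℝ) * α := by
    rw [zero_add, ← div_lt_iff₀ h0]
    exact_mod_cast Nat.lt_floor_add_one (1 / α)
  have hMα : 1 + 1 < (M : ℝ) * α := by rwa [one_add_one_eq_two, ← div_lt_iff₀ h0]
  have hsmall := PTree.tendsto_nu_maxOutdeg_le_div h0 hL
  have hreroot := PTree.tendsto_nu_rerootable h0 hL0 M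
  have hmerge := PTree.tendsto_nu_mergeable h0 hL0 (l := fun _ => M) (C := M) (by simp) hK
  have hmerge' := PTree.tendsto_nu_mergeable h0 hL0 (l := fun n => n + 1) (C := L)
    (fun n => by rw [Real.rpow_one]; exact_mod_cast Nat.lt_mul_div_succ n hL0) hMα
  rw [← tendsto_add_atTop_iff_nat 1]
  refine squeeze_zero' (Eventually.of_forall fun n =>
    PTree.nu_nonneg (PTree.factorialWeight_nonneg α) _ _) ?_
    (by simpa only [add_zero] using hsmall.add (hreroot.add (hmerge.add hmerge')))
  filter_upwards [(Nat.tendsto_div_const_atTop hL0.ne').eventually_ge_atTop M] with n hn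
  exact PTree.nu_lt_maxOutdeg_child_le (PTree.factorialWeight_nonneg α) hn

/-- Theorem 3 (ii): with `w_n = ((n−1)!)^α`, `0 < α < 1`, `K = ⌊1/α⌋`, the probability that
some vertex other than `s` has degree `> K + 1` (i.e. outdegree `> K`) tends to 0. -/
theorem stmt_12 (α : ℝ) (h0 : 0 < α) (h1 : α < 1) :
    Tendsto (fun N : ℕ =>
        nu (fun n => ((n - 1).factorial : ℝ) ^ α) N
          (fun t => ∃ c ∈ t.children, ⌊1 / α⌋₊ < c.maxOutdeg))
      atTop (nhds 0) := by
  exact stmt_12_general α h0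
end
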